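/- Suppose each receiver of a discrete memoryless interference channel has side information correlated with the interfering source: Receiver 1 observes V_2^n and Receiver 2 observes V_1^n. The sources U1 and U2 can be transmitted reliably if there exist a finite-valued random variable Q and finite-valued auxiliary random variables W1, W2 with joint distribution p(q,u1,v1,u2,v2,w1,w2,x1,x2,y1,y2) = p(q) p(u1,v1) p(u2,v2) p(w1,x1|u1,q) p(w2,x2|u2,q) p(y1,y2|x1,x2) such that all of the following strict inequalities hold: H(U1) < I(X1; V2,Y1 | W2,Q); H(U2) < I(X2; V1,Y2 | W1,Q); H(U1) < I(W2,X1; V2,Y1 | Q) - I(U2;W2|Q); H(U2) < I(W1,X2; V1,Y2 | Q) - I(U1;W1|Q); H(U1)+H(U2) < I(X1; V2,Y1 | W1,W2,Q) + I(W1,X2; V1,Y2 | Q); H(U1)+H(U2) < I(X2; V1,Y2 | W1,W2,Q) + I(W2,X1; V2,Y1 | Q); H(U1)+H(U2) < I(W1,X2; V1,Y2 | W2,Q) + I(W2,X1; V2,Y1 | W1,Q); H(U1)+H(U2) < I(W2,X1; V2,Y1 | Q) + I(W1,X2; V1,Y2 | W2,Q) - I(U1;W1|Q); H(U1)+H(U2)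 < I(W1,X2; V1,Y2 | Q) + I(W2,X1; V2,Y1 | W1,Q) - I(U2;W2|Q); 2H(U1)+H(U2) < I(W2,X1; V2,Y1 | Q) + I(X1; V2,Y1 | W1,W2,Q) + I(W1,X2; V1,Y2 | W2,Q); H(U1)+2H(U2) < I(W1,X2; V1,Y2 | Q) + I(X2; V1,Y2 | W1,W2,Q) + I(W2,X1; V2,Y1 | W1,Q). -/

import Mathlib

open Finset Real Filter
open scoped Classical

namespace Paper

/-- `p` is a probability mass function on the finite type `α`. -/
def IsPMF {α : Type*} [Fintype α] (p : α → ℝ) : Prop :=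
  (∀ a, 0 ≤ p a) ∧ ∑ a, p a = 1

/-- `k` is a transition probability (channel) from `α` to the finite type `β`. -/
def IsKernel {α β : Type*} [Fintype β] (k : α → β → ℝ) : Prop :=
  ∀ a, IsPMF (k a)

variable {Ω : Type*} [Fintype Ω]

/-- Probability that the random variable `X` takes the value `x`, under the weight `p`. -/
noncomputable def pr {α : Type*} (p : Ω → ℝ) (X : Ω → α) (x : α) : ℝ :=
  ∑ ω, if X ω = x then p ω else 0

/-- Shannon entropy (base 2) of the random variable `X` under `p`. -/
noncomputable def ent {α : Type*} [Fintype α] (p : Ω → ℝ) (X : Ω → α) : ℝ :=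
  ∑ x, -(pr p X x * Real.logb 2 (pr p X x))

/-- Conditional entropy `H(X|Y) = H(X,Y) - H(Y)`. -/
noncomputable def condEnt {α β : Type*} [Fintype α] [Fintype β]
    (p : Ω → ℝ) (X : Ω → α) (Y : Ω → β) : ℝ :=
  ent p (fun ω => (X ω, Y ω)) - ent p Y

/-- Mutual information `I(X;Y) = H(X) + H(Y) - H(X,Y)`. -/
noncomputable def mi {α β : Type*} [Fintype α] [Fintype β]
    (p : Ω → ℝ) (X : Ω → α) (Y : Ω → β) : ℝ :=
  ent p X + ent p Y - ent p (fun ω => (X ω, Y ω))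

/-- Conditional mutual information `I(X;Y|Z) = H(X,Z) + H(Y,Z) - H(X,Y,Z) - H(Z)`. -/
noncomputable def cmi {α β γ : Type*} [Fintype α] [Fintype β] [Fintype γ]
    (p : Ω → ℝ) (X : Ω → α) (Y : Ω → β) (Z : Ω → γ) : ℝ :=
  ent p (fun ω => (X ω, Z ω)) + ent p (fun ω => (Y ω, Z ω))
    - ent p (fun ω => (X ω, Y ω, Z ω)) - ent p Z

/-- The Markov chain `A → B → C`: `A` and `C` are conditionally independent given `B`. -/
def MarkovChain {α β γ : Type*} (p : Ω → ℝ) (A : Ω → α) (B : Ω → β) (C : Ω → γ) : Prop :=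
  ∀ a b c, pr p (fun ω => (A ω, B ω, C ω)) (a, b, c) * pr p B b =
    pr p (fun ω => (A ω, B ω)) (a, b) * pr p (fun ω => (B ω, C ω)) (b, c)

/-! ## Statement 1: sufficient conditions (joint source-channel Han–Kobayashi scheme)
when each receiver has side information correlated with the interfering source. -/

section Stmt1

variable {U1 V1 U2 V2 X1 X2 Y1 Y2 : Type}
  [Fintype U1] [Fintype V1] [Fintype U2] [Fintype V2]
  [Fintype X1] [Fintype X2] [Fintype Y1] [Fintype Y2]

/-- Error probability of a length-`n` joint source-channel code, where Receiver 1
has side information `V_2^n` and Receiver 2 has side information `V_1^n`. -/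
noncomputable def PerrCross (ch : X1 × X2 → Y1 × Y2 → ℝ)
    (q1 : U1 × V1 → ℝ) (q2 : U2 × V2 → ℝ) (n : ℕ)
    (f1 : (Fin n → U1) → Fin n → X1) (f2 : (Fin n → U2) → Fin n → X2)
    (g1 : (Fin n → Y1) → (Fin n → V2) → Fin n → U1)
    (g2 : (Fin n → Y2) → (Fin n → V1) → Fin n → U2) : ℝ :=
  ∑ u1 : Fin n → U1, ∑ v1 : Fin n → V1, ∑ u2 : Fin n → U2, ∑ v2 : Fin n → V2,
    ∑ y : Fin n → Y1 × Y2,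
      (∏ i, q1 (u1 i, v1 i)) * (∏ i, q2 (u2 i, v2 i)) *
      (∏ i, ch (f1 u1 i, f2 u2 i) (y i)) *
      (if g1 (fun i => (y i).1) v2 = u1 ∧ g2 (fun i => (y i).2) v1 = u2 then 0 else 1)

/-- The sources can be transmitted reliably (side information about the interfering source). -/
def ReliableCross (ch : X1 × X2 → Y1 × Y2 → ℝ)
    (q1 : U1 × V1 → ℝ) (q2 : U2 × V2 → ℝ) : Prop :=
  ∃ (f1 : ∀ n : ℕ, (Fin n → U1) → Fin n → X1)
    (f2 : ∀ n : ℕ, (Fin n → U2) → Fin n → X2)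
    (g1 : ∀ n : ℕ, (Fin n → Y1) → (Fin n → V2) → Fin n → U1)
    (g2 : ∀ n : ℕ, (Fin n → Y2) → (Fin n → V1) → Fin n → U2),
    Tendsto (fun n => PerrCross ch q1 q2 n (f1 n) (f2 n) (g1 n) (g2 n)) atTop (nhds 0)

/-- The joint single-letter law
`p(q,u1,v1,u2,v2,w1,x1,w2,x2,y1,y2) =
  p(q) p(u1,v1) p(u2,v2) p(w1,x1|u1,q) p(w2,x2|u2,q) p(y1,y2|x1,x2)`. -/
noncomputable def jointHK (mQ mW1 mW2 : ℕ) (ch : X1 × X2 → Y1 × Y2 → ℝ)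
    (q1 : U1 × V1 → ℝ) (q2 : U2 × V2 → ℝ)
    (pQ : Fin mQ → ℝ) (k1 : U1 → Fin mQ → Fin mW1 × X1 → ℝ)
    (k2 : U2 → Fin mQ → Fin mW2 × X2 → ℝ) :
    Fin mQ × U1 × V1 × U2 × V2 × Fin mW1 × X1 × Fin mW2 × X2 × Y1 × Y2 → ℝ :=
  fun (q, u1, v1, u2, v2, w1, x1, w2, x2, y1, y2) =>
    pQ q * q1 (u1, v1) * q2 (u2, v2) * k1 u1 q (w1, x1) * k2 u2 q (w2, x2) * ch (x1, x2) (y1, y2)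

end Stmt1

/-!
Random coding with likelihood encoders. For every time-sharing word, User `k` draws a codebook of
about `2 ^ (n * R_k)` independent cloud centres, and each source word picks one of them, together
with a channel input, with probability given by the likelihood ratio of the test channel. The pick
is dominated by the test channel, and it fails with vanishing probability as soon as
`I(U_k; W_k | Q) < R_k`. A receiver looks for the source word whose codeword passes a likelihood
test together with some cloud centre of the interferer's codebook. A wrong source word may share
the cloud centre of the true one or not, and may be tested with the interferer's true cloud centre
or another one, so the union bound yields four conditions at each receiver. Eliminating `R_1` and
`R_2` from them and from the two encoding conditions leaves the eleven inequalities.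
-/

section FiniteMean

variable {α β : Type*} [Fintype α] [Fintype β]

/-- The indicator of a proposition, as a real number. -/
noncomputable def ind (P : Prop) : ℝ := if P then 1 else 0

lemma ind_nonneg (P : Prop) : 0 ≤ ind P := by unfold ind; split_ifs <;> norm_num

lemma ind_of_true {P : Prop} (h : P) : ind P = 1 := if_pos h

lemma ind_of_false {P : Prop} (h : ¬P) : ind P = 0 := if_neg h

lemma ind_le_one (P : Prop) : ind P ≤ 1 := by unfold ind; split_ifs <;> norm_num

lemma ind_mono {P Q : Prop} (h : P → Q) : ind P ≤ ind Q := by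
  by_cases hP : P
  · rw [ind_of_true hP, ind_of_true (h hP)]
  · rw [ind_of_false hP]; exact ind_nonneg Q

lemma ind_or_le (P Q : Prop) : ind (P ∨ Q) ≤ ind P + ind Q := by
  by_cases hP : P
  · rw [ind_of_true hP, ind_of_true (Or.inl hP)]; exact le_add_of_nonneg_right (ind_nonneg Q)
  · rw [ind_of_false hP, zero_add]; exact ind_mono fun h ↦ h.resolve_left hP

/-- The expectation of `f` under the weight `p` on a finite type. -/
noncomputable def mean (p f : α → ℝ) : ℝ := ∑ a, p a * f a

lemma mean_mono {p f g : α → ℝ} (hp : ∀ a, 0 ≤ p a) (h : ∀ a, p a ≠ 0 → f a ≤ g a) :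
    mean p f ≤ mean p g := by
  refine Finset.sum_le_sum fun a _ ↦ ?_
  by_cases ha : p a = 0
  · simp only [ha, zero_mul, le_refl]
  · exact mul_le_mul_of_nonneg_left (h a ha) (hp a)

lemma mean_congr {p f g : α → ℝ} (h : ∀ a, p a ≠ 0 → f a = g a) : mean p f = mean p g := by
  refine Finset.sum_congr rfl fun a _ ↦ ?_
  by_cases ha : p a = 0
  · simp only [ha, zero_mul]
  · rw [h a ha]

lemma mean_nonneg {p f : α → ℝ} (hp : ∀ a, 0 ≤ p a) (hf : ∀ a, 0 ≤ f a) : 0 ≤ mean p f :=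
  Finset.sum_nonneg fun a _ ↦ mul_nonneg (hp a) (hf a)

lemma mean_add (p f g : α → ℝ) : mean p (fun a ↦ f a + g a) = mean p f + mean p g := by
  simp only [mean, mul_add, Finset.sum_add_distrib]

lemma mean_sub (p f g : α → ℝ) : mean p (fun a ↦ f a - g a) = mean p f - mean p g := by
  simp only [mean, mul_sub, Finset.sum_sub_distrib]

lemma mean_const_mul (p f : α → ℝ) (c : ℝ) : mean p (fun a ↦ c * f a) = c * mean p f := by
  simp only [mean, mul_left_comm _ c, Finset.mul_sum]

lemma mean_sum {κ : Type*} (p : α → ℝ) (s : Finset κ) (f : κ → α → ℝ) :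
    mean p (fun a ↦ ∑ i ∈ s, f i a) = ∑ i ∈ s, mean p (f i) := by
  simp only [mean, Finset.mul_sum]
  exact Finset.sum_comm

lemma mean_comm (p : α → ℝ) (q : β → ℝ) (f : α → β → ℝ) :
    mean p (fun a ↦ mean q (f a)) = mean q fun b ↦ mean p fun a ↦ f a b := by
  simp only [mean, Finset.mul_sum]
  rw [Finset.sum_comm]
  simp only [mul_left_comm]

lemma mean_elim {κ : Type*} (p : α → ℝ) (o : Option κ) (f : α → κ → ℝ) :
    mean p (fun a ↦ o.elim 0 (f a)) = o.elim 0 fun b ↦ mean p fun a ↦ f a b := by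
  cases o <;> simp only [Option.elim, mean, mul_zero, Finset.sum_const_zero]

lemma IsPMF.mean_const {p : α → ℝ} (hp : IsPMF p) (c : ℝ) : mean p (fun _ ↦ c) = c := by
  rw [mean, ← Finset.sum_mul, hp.2, one_mul]

lemma IsPMF.nonempty {p : α → ℝ} (hp : IsPMF p) : Nonempty α := by
  by_contra h
  have := hp.2
  simp [not_nonempty_iff.mp h] at this

lemma IsPMF.exists_le_mean {p : α → ℝ} (hp : IsPMF p) (f : α → ℝ) : ∃ a, f a ≤ mean p f := by
  have := hp.nonempty
  obtain ⟨a, ha⟩ := Finite.exists_min f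
  exact ⟨a, (hp.mean_const (f a)).symm.le.trans (mean_mono hp.1 fun b _ ↦ ha b)⟩

end FiniteMean

section ProductLaw

variable {ι α : Type*} [Fintype ι] [Fintype α]

/-- The law of independent letters, the `i`-th one distributed according to `p i`. -/
def prodLaw (p : ι → α → ℝ) (c : ι → α) : ℝ := ∏ i, p i (c i)

variable [DecidableEq ι]

lemma mean_prodLaw_prod (p f : ι → α → ℝ) :
    mean (prodLaw p) (fun c ↦ ∏ i, f i (c i)) = ∏ i, mean (p i) (f i) := by
  simp only [mean, prodLaw, ← Finset.prod_mul_distrib, Fintype.prod_sum]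

lemma isPMF_prodLaw {p : ι → α → ℝ} (hp : ∀ i, IsPMF (p i)) : IsPMF (prodLaw p) := by
  refine ⟨fun c ↦ Finset.prod_nonneg fun i _ ↦ (hp i).1 _, ?_⟩
  simp only [prodLaw, ← Fintype.prod_sum, (hp _).2, Finset.prod_const_one]

lemma mean_prodLaw_eval {p : ι → α → ℝ} (hp : ∀ i, IsPMF (p i)) (j : ι) (f : α → ℝ) :
    mean (prodLaw p) (fun c ↦ f (c j)) = mean (p j) f := by
  have h := mean_prodLaw_prod p fun i a ↦ if i = j then f a else 1
  simp only [Finset.prod_ite_eq', Finset.mem_univ, if_true] at h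
  rw [h, Finset.prod_eq_single j (fun i _ hi ↦ by simp only [if_neg hi, (hp i).mean_const])
    (fun h ↦ absurd (Finset.mem_univ j) h)]
  simp only [if_true]

lemma mean_prodLaw_eval_mul_eval {p : ι → α → ℝ} (hp : ∀ i, IsPMF (p i)) {j l : ι} (hjl : j ≠ l)
    (f g : α → ℝ) :
    mean (prodLaw p) (fun c ↦ f (c j) * g (c l)) = mean (p j) f * mean (p l) g := by
  have h := mean_prodLaw_prod p fun i a ↦
    (if i = j then f a else 1) * if i = l then g a else 1
  simp only [Finset.prod_mul_distrib, Finset.prod_ite_eq', Finset.mem_univ, if_true] at h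
  rw [h, Fintype.prod_eq_mul j l hjl fun i hi ↦ by
    simp only [if_neg hi.1, if_neg hi.2, mul_one, (hp i).mean_const]]
  simp only [if_true, if_neg hjl, if_neg hjl.symm, mul_one, one_mul]

lemma mean_prodLaw_eval_eval {p : ι → α → ℝ} (hp : ∀ i, IsPMF (p i)) {j l : ι} (hjl : j ≠ l)
    (φ : α → α → ℝ) :
    mean (prodLaw p) (fun c ↦ φ (c j) (c l)) = mean (p j) fun a ↦ mean (p l) (φ a) := by
  have hφ (c : ι → α) : φ (c j) (c l) = ∑ a, ind (c j = a) * φ a (c l) := by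
    simp only [ind, ite_mul, one_mul, zero_mul, Finset.sum_ite_eq, Finset.mem_univ, if_true]
  have hj (a : α) : mean (p j) (fun b ↦ ind (b = a)) = p j a := by
    simp only [mean, ind, mul_ite, mul_one, mul_zero, Finset.sum_ite_eq', Finset.mem_univ, if_true]
  simp only [hφ]
  rw [mean_sum, Finset.sum_congr rfl fun a _ ↦
    mean_prodLaw_eval_mul_eval hp hjl (fun b ↦ ind (b = a)) (φ a)]
  simp only [hj]
  rfl

lemma mean_prodLaw_sum_sum {M : ℕ} {r : α → ℝ} (hr : IsPMF r) (φ : α → α → ℝ) :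
    mean (prodLaw fun _ : Fin M ↦ r) (fun c ↦ ∑ m, ∑ m', φ (c m) (c m')) =
      M * mean r (fun a ↦ φ a a) + M * (M - 1) * mean r fun a ↦ mean r (φ a) := by
  have hrow (m : Fin M) : ∑ m', mean (prodLaw fun _ : Fin M ↦ r) (fun c ↦ φ (c m) (c m')) =
      mean r (fun a ↦ φ a a) + (M - 1) * mean r fun a ↦ mean r (φ a) := by
    rw [← Finset.add_sum_erase _ _ (Finset.mem_univ m),
      mean_prodLaw_eval (fun _ ↦ hr) m fun a ↦ φ a a,
      Finset.sum_congr rfl fun m' hm' ↦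
        mean_prodLaw_eval_eval (fun _ ↦ hr) (Finset.ne_of_mem_erase hm').symm φ,
      Finset.sum_const, Finset.card_erase_of_mem (Finset.mem_univ m), Finset.card_univ,
      Fintype.card_fin, nsmul_eq_mul, Nat.cast_pred m.pos]
  simp only [mean_sum, hrow, Finset.sum_const, Finset.card_univ, Fintype.card_fin, nsmul_eq_mul]
  ring

lemma mean_prodLaw_sum_sum_le {M : ℕ} {r : α → ℝ} (hr : IsPMF r) {φ : α → α → ℝ}
    (hφ : ∀ a b, 0 ≤ φ a b) :
    mean (prodLaw fun _ : Fin M ↦ r) (fun c ↦ ∑ m, ∑ m', φ (c m) (c m')) ≤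
      M * mean r (fun a ↦ φ a a) + M * M * mean r fun a ↦ mean r (φ a) := by
  rw [mean_prodLaw_sum_sum hr]
  gcongr
  · exact mean_nonneg hr.1 fun a ↦ mean_nonneg hr.1 (hφ a)
  · exact sub_le_self _ zero_le_one

lemma mean_prodLaw_sq_sum_sub_le {M : ℕ} {r : α → ℝ} (hr : IsPMF r) (h : α → ℝ) :
    mean (prodLaw fun _ : Fin M ↦ r) (fun c ↦ (∑ m, h (c m) - M * mean r h) ^ 2) ≤
      M * mean r fun a ↦ h a ^ 2 := by
  have hcentre : mean r (fun a ↦ h a - mean r h) = 0 := by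
    rw [mean_sub, hr.mean_const, sub_self]
  have hvar : mean r (fun a ↦ (h a - mean r h) * (h a - mean r h)) =
      mean r (fun a ↦ h a ^ 2) - mean r h ^ 2 := by
    have (a : α) : (h a - mean r h) * (h a - mean r h) =
        h a ^ 2 - (2 * mean r h) * h a + mean r h ^ 2 := by ring
    simp only [this, mean_add, mean_sub, mean_const_mul, hr.mean_const]
    ring
  have hsq (c : Fin M → α) : (∑ m, h (c m) - M * mean r h) ^ 2 =
      ∑ m, ∑ m', (h (c m) - mean r h) * (h (c m') - mean r h) := by
    simp only [← Finset.mul_sum, ← Finset.sum_mul, Finset.sum_sub_distrib, Finset.sum_const,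
      Finset.card_univ, Fintype.card_fin, nsmul_eq_mul, sq]
  simp only [hsq, mean_prodLaw_sum_sum hr (fun a b ↦ (h a - mean r h) * (h b - mean r h)),
    mean_const_mul, hcentre, hvar, mul_zero, (hr.mean_const)]
  nlinarith [mul_nonneg (Nat.cast_nonneg (α := ℝ) M) (sq_nonneg (mean r h))]

end ProductLaw

section RandomCode

variable {U W X : Type*} {M : ℕ}

/-- The first marginal of a weight on pairs; applied to a joint law of a cloud centre and a channel
input it is the law of the cloud centre. -/
def fstLaw [Fintype X] (κ : W × X → ℝ) (w : W) : ℝ := ∑ x, κ (w, x)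

/-- An encoder with `M` cloud centres: `c.1` is the codebook and `c.2 u` is the pair (index of a
cloud centre, channel input) selected for the source letter `u`, with `none` for a failure. -/
abbrev Code (M : ℕ) (U W X : Type*) := (Fin M → W) × (U → Option (Fin M × X))

/-- The pair (cloud centre, channel input) that the encoder `c` selects for `u`. -/
def codeword (c : Code M U W X) (u : U) : Option (W × X) :=
  (c.2 u).map fun mx ↦ (c.1 mx.1, mx.2)

/-- The likelihood ratio of `K` against `r`, set to `0` where it exceeds `s`. -/
noncomputable def truncRatio (K r : W → ℝ) (s : ℝ) (w : W) : ℝ :=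
  ind (K w ≤ s * r w) * (K w / r w)

variable [Fintype X] {k : U → W × X → ℝ} {r : W → ℝ} {s : ℝ} {u v : U}

/-- The weight which the likelihood encoder for the test channel `k` gives to index and input `mx`.
Codewords whose likelihood ratio against the cloud law `r` exceeds `s` are discarded. -/
noncomputable def selectWeight (k : U → W × X → ℝ) (r : W → ℝ) (s : ℝ) (C : Fin M → W) (u : U)
    (mx : Fin M × X) : ℝ :=
  ind (fstLaw (k u) (C mx.1) ≤ s * r (C mx.1)) * (k u (C mx.1, mx.2) / (M * r (C mx.1)))

/-- The selection law of the likelihood encoder: the weights `selectWeight`, scaled down if their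
sum exceeds `1`, the missing mass being put on `none`. -/
noncomputable def selectLaw (k : U → W × X → ℝ) (r : W → ℝ) (s : ℝ) (C : Fin M → W) (u : U) :
    Option (Fin M × X) → ℝ
  | some mx => selectWeight k r s C u mx / max 1 (∑ ny, selectWeight k r s C u ny)
  | none => 1 - (∑ ny, selectWeight k r s C u ny) / max 1 (∑ ny, selectWeight k r s C u ny)

/-- The law of the random code: cloud centres drawn independently from `r`, then an independent
selection for every source letter. -/
noncomputable def codeLaw [Fintype U] (k : U → W × X → ℝ) (r : W → ℝ) (s : ℝ) (c : Code M U W X) :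
    ℝ :=
  prodLaw (fun _ ↦ r) c.1 * prodLaw (selectLaw k r s c.1) c.2

lemma fstLaw_nonneg {κ : W × X → ℝ} (hκ : ∀ a, 0 ≤ κ a) (w : W) : 0 ≤ fstLaw κ w :=
  Finset.sum_nonneg fun _ _ ↦ hκ _

lemma sum_selectWeight (C : Fin M → W) : ∑ mx, selectWeight k r s C u mx =
    (M : ℝ)⁻¹ * ∑ m, truncRatio (fstLaw (k u)) r s (C m) := by
  simp only [selectWeight, truncRatio, Fintype.sum_prod_type, ← Finset.mul_sum, ← Finset.sum_div,
    fstLaw]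
  rw [Finset.mul_sum]
  refine Finset.sum_congr rfl fun m _ ↦ ?_
  rw [mul_left_comm, inv_mul_eq_div, div_div, mul_comm (r _)]

lemma selectLaw_none_le {μ δ : ℝ} (hμ : μ ≤ 1) (hδ : 0 < δ) (C : Fin M → W) :
    selectLaw k r s C u none ≤
      1 - μ + δ + δ⁻¹ * (∑ mx, selectWeight k r s C u mx - μ) ^ 2 := by
  simp only [selectLaw]
  set T := ∑ mx, selectWeight k r s C u mx
  have hdev : μ - T ≤ δ + δ⁻¹ * (T - μ) ^ 2 := by
    rw [← sub_le_iff_le_add', inv_mul_eq_div, le_div_iff₀ hδ]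
    nlinarith [sq_nonneg (T - μ + δ / 2), sq_nonneg δ]
  rcases le_total T 1 with hT | hT
  · rw [max_eq_left hT, div_one]; linarith
  · rw [max_eq_right hT, div_self (by positivity)]
    have : 0 ≤ δ⁻¹ * (T - μ) ^ 2 := by positivity
    linarith

variable [Fintype W]

lemma mean_fstLaw (κ : W × X → ℝ) (f : W → ℝ) : mean (fstLaw κ) f = mean κ fun a ↦ f a.1 := by
  simp only [mean, fstLaw, Fintype.sum_prod_type, Finset.sum_mul]

lemma IsPMF.fstLaw {κ : W × X → ℝ} (hκ : IsPMF κ) : IsPMF (fstLaw κ) :=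
  ⟨fstLaw_nonneg hκ.1, by simp only [Paper.fstLaw, ← Fintype.sum_prod_type, hκ.2]⟩

lemma selectWeight_nonneg (hk : IsKernel k) (hr : IsPMF r) (C : Fin M → W) (mx : Fin M × X) :
    0 ≤ selectWeight k r s C u mx :=
  mul_nonneg (ind_nonneg _)
    (div_nonneg ((hk u).1 _) (mul_nonneg (Nat.cast_nonneg M) (hr.1 _)))

lemma isPMF_selectLaw (hk : IsKernel k) (hr : IsPMF r) (C : Fin M → W) (u : U) :
    IsPMF (selectLaw k r s C u) := by
  refine ⟨fun o ↦ ?_, ?_⟩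
  · cases o with
    | none => exact sub_nonneg.2 (div_le_one_of_le₀ (le_max_right _ _) (by positivity))
    | some mx => exact div_nonneg (selectWeight_nonneg hk hr C mx) (by positivity)
  · simp only [Fintype.sum_option, selectLaw, ← Finset.sum_div, sub_add_cancel]

lemma selectLaw_some_le (hk : IsKernel k) (hr : IsPMF r) (C : Fin M → W) (mx : Fin M × X) :
    selectLaw k r s C u (some mx) ≤ (M : ℝ)⁻¹ * (k u (C mx.1, mx.2) / r (C mx.1)) := by
  refine (div_le_self (selectWeight_nonneg hk hr C mx) (le_max_left _ _)).trans ?_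
  rw [inv_mul_eq_div, div_div, mul_comm (r _)]
  exact mul_le_of_le_one_left
    (div_nonneg ((hk u).1 _) (mul_nonneg (Nat.cast_nonneg M) (hr.1 _))) (ind_le_one _)

lemma mean_selectLaw_elim_le (hk : IsKernel k) (hr : IsPMF r) (C : Fin M → W)
    {ψ : Fin M × X → ℝ} (hψ : ∀ mx, 0 ≤ ψ mx) :
    mean (selectLaw k r s C u) (fun o ↦ o.elim 0 ψ) ≤
      (M : ℝ)⁻¹ * ∑ m, ∑ x, k u (C m, x) / r (C m) * ψ (m, x) := by
  simp only [mean, Fintype.sum_option, Option.elim, mul_zero, zero_add, Fintype.sum_prod_type,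
    Finset.mul_sum, ← mul_assoc]
  gcongr with m _ x _
  · exact hψ _
  · exact selectLaw_some_le hk hr C (m, x)

lemma mean_sum_div_mul_le (hk : IsKernel k) (hr : IsPMF r) {φ : W × X → ℝ} (hφ : ∀ a, 0 ≤ φ a) :
    mean r (fun w ↦ ∑ x, k u (w, x) / r w * φ (w, x)) ≤ mean (k u) φ := by
  simp only [mean, Fintype.sum_prod_type, Finset.mul_sum]
  refine Finset.sum_le_sum fun w _ ↦ Finset.sum_le_sum fun x _ ↦ ?_
  rcases (hr.1 w).eq_or_lt with hw | hw
  · rw [← hw, zero_mul]; exact mul_nonneg ((hk u).1 _) (hφ _)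
  · rw [← mul_assoc, mul_div_cancel₀ _ hw.ne']

lemma mean_truncRatio {K : W → ℝ} (hr : IsPMF r) (hrK : ∀ w, r w = 0 → K w = 0) :
    mean r (truncRatio K r s) = mean K fun w ↦ ind (K w ≤ s * r w) := by
  refine Finset.sum_congr rfl fun w _ ↦ ?_
  simp only [truncRatio]
  rcases (hr.1 w).eq_or_lt with hw | hw
  · rw [hrK w hw.symm, ← hw, zero_mul, zero_mul]
  · rw [mul_left_comm, mul_div_cancel₀ _ hw.ne', mul_comm]

lemma mean_sq_truncRatio_le {K : W → ℝ} (hr : IsPMF r) (hK : IsPMF K) (hs : 0 ≤ s) :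
    mean r (fun w ↦ truncRatio K r s w ^ 2) ≤ s := by
  refine le_of_le_of_eq ?_ (hK.mean_const s)
  refine Finset.sum_le_sum fun w _ ↦ ?_
  rcases (hr.1 w).eq_or_lt with hw | hw
  · rw [← hw, zero_mul]; exact mul_nonneg (hK.1 w) hs
  by_cases hE : K w ≤ s * r w
  · calc _ = K w * (K w / r w) := by
          simp only [truncRatio, ind_of_true hE]; field_simp
      _ ≤ K w * s := mul_le_mul_of_nonneg_left ((div_le_iff₀ hw).2 hE) (hK.1 w)
  · simp only [truncRatio, ind_of_false hE, zero_mul, zero_pow two_ne_zero, mul_zero]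
    exact mul_nonneg (hK.1 w) hs

variable [Fintype U] [DecidableEq U]

lemma mean_codeLaw (f : Code M U W X → ℝ) : mean (codeLaw k r s) f =
    mean (prodLaw fun _ ↦ r) fun C ↦ mean (prodLaw (selectLaw k r s C)) fun F ↦ f (C, F) := by
  simp only [mean, codeLaw, Fintype.sum_prod_type, Finset.mul_sum, mul_assoc]

lemma isPMF_codeLaw (hk : IsKernel k) (hr : IsPMF r) :
    IsPMF (codeLaw k r s : Code M U W X → ℝ) := by
  refine ⟨fun c ↦ mul_nonneg ((isPMF_prodLaw fun _ ↦ hr).1 _)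
    ((isPMF_prodLaw (isPMF_selectLaw hk hr c.1)).1 _), ?_⟩
  have h := mean_codeLaw (M := M) (k := k) (r := r) (s := s) fun _ ↦ 1
  simp only [(isPMF_prodLaw (isPMF_selectLaw hk hr _)).mean_const,
    (isPMF_prodLaw fun _ : Fin M ↦ hr).mean_const] at h
  simpa only [mean, mul_one] using h

lemma mean_codeLaw_codeword_le (hk : IsKernel k) (hr : IsPMF r)
    {ψ : (Fin M → W) → W × X → ℝ} (hψ : ∀ C a, 0 ≤ ψ C a) :
    mean (codeLaw k r s) (fun c : Code M U W X ↦ (codeword c u).elim 0 (ψ c.1)) ≤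
      (M : ℝ)⁻¹ * mean (prodLaw fun _ ↦ r) fun C ↦
        ∑ m, ∑ x, k u (C m, x) / r (C m) * ψ C (C m, x) := by
  rw [mean_codeLaw, ← mean_const_mul]
  refine mean_mono (isPMF_prodLaw fun _ ↦ hr).1 fun C _ ↦ ?_
  simp only [codeword, Option.elim_map]
  rw [mean_prodLaw_eval (isPMF_selectLaw hk hr C) u fun o ↦
    o.elim 0 ((ψ C) ∘ fun mx ↦ (C mx.1, mx.2))]
  exact mean_selectLaw_elim_le hk hr C fun mx ↦ hψ _ _

lemma mean_codeword_le (hM : 0 < M) (hk : IsKernel k) (hr : IsPMF r) {φ : W × X → ℝ}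
    (hφ : ∀ a, 0 ≤ φ a) :
    mean (codeLaw k r s) (fun c : Code M U W X ↦ (codeword c u).elim 0 φ) ≤ mean (k u) φ := by
  refine (mean_codeLaw_codeword_le hk hr fun _ ↦ hφ).trans (le_of_eq_of_le ?_
    (mean_sum_div_mul_le hk hr hφ))
  rw [mean_sum, Finset.sum_congr rfl fun m _ ↦ mean_prodLaw_eval (fun _ ↦ hr) m
    fun w ↦ ∑ x, k u (w, x) / r w * φ (w, x)]
  rw [Finset.sum_const, Finset.card_univ, Fintype.card_fin, nsmul_eq_mul,
    inv_mul_cancel_left₀ (by positivity)]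

-- Besides the selected centre, whose law is `k u`, the other centres look like fresh `r`-samples.
lemma mean_codeword_sum_codebook_le (hM : 0 < M) (hk : IsKernel k) (hr : IsPMF r)
    {φ : W × X → W → ℝ} (hφ : ∀ a w, 0 ≤ φ a w) :
    mean (codeLaw k r s) (fun c : Code M U W X ↦
      (codeword c u).elim 0 fun a ↦ ∑ m, φ a (c.1 m)) ≤
        mean (k u) fun a ↦ φ a a.1 + M * mean r (φ a) := by
  have hscale (A B : ℝ) : (M : ℝ)⁻¹ * (M * A + M * M * B) = A + M * B := by field_simp
  calc _ ≤ (M : ℝ)⁻¹ * mean (prodLaw fun _ ↦ r) fun C : Fin M → W ↦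
          ∑ m, ∑ m', ∑ x, k u (C m, x) / r (C m) * φ (C m, x) (C m') := by
        refine (mean_codeLaw_codeword_le hk hr fun C a ↦
          Finset.sum_nonneg fun m _ ↦ hφ a (C m)).trans_eq ?_
        congr! 4 with C m
        simp only [Finset.mul_sum]
        exact Finset.sum_comm
    _ ≤ (M : ℝ)⁻¹ * (M * mean r (fun w ↦ ∑ x, k u (w, x) / r w * φ (w, x) w) +
          M * M * mean r fun w ↦ mean r fun w' ↦ ∑ x, k u (w, x) / r w * φ (w, x) w') :=
        mul_le_mul_of_nonneg_left (mean_prodLaw_sum_sum_le hr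
          (φ := fun w w' ↦ ∑ x, k u (w, x) / r w * φ (w, x) w') fun w w' ↦
            Finset.sum_nonneg fun x _ ↦ mul_nonneg (div_nonneg ((hk u).1 _) (hr.1 _)) (hφ _ _))
          (by positivity)
    _ = mean r fun w ↦ ∑ x, k u (w, x) / r w * (φ (w, x) w + M * mean r (φ (w, x))) := by
        rw [hscale]
        simp only [mul_add, Finset.sum_add_distrib, mean_add, mean_sum, mean_const_mul,
          mul_left_comm _ (M : ℝ), ← Finset.mul_sum]
    _ ≤ mean (k u) fun a ↦ φ a a.1 + M * mean r (φ a) :=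
        mean_sum_div_mul_le (φ := fun a ↦ φ a a.1 + M * mean r (φ a)) hk hr fun a ↦
          add_nonneg (hφ _ _) (mul_nonneg (by positivity) (mean_nonneg hr.1 (hφ a)))

lemma mean_codeLaw_codeword_codeword_le (hk : IsKernel k) (hr : IsPMF r) (huv : u ≠ v)
    {φ : W × X → W × X → ℝ} (hφ : ∀ a b, 0 ≤ φ a b) :
    mean (codeLaw k r s) (fun c : Code M U W X ↦
      (codeword c u).elim 0 fun a ↦ (codeword c v).elim 0 fun b ↦ φ a b) ≤
        (M : ℝ)⁻¹ * (M : ℝ)⁻¹ * mean (prodLaw fun _ ↦ r) fun C : Fin M → W ↦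
            ∑ m, ∑ m', ∑ x, k u (C m, x) / r (C m) * ∑ y, k v (C m', y) / r (C m') *
              φ (C m, x) (C m', y) := by
  rw [mean_codeLaw, ← mean_const_mul]
  refine mean_mono (isPMF_prodLaw fun _ ↦ hr).1 fun C _ ↦ ?_
  have hφ' (a : W × X) (o : Option (Fin M × X)) :
      0 ≤ o.elim 0 (φ a ∘ fun mx ↦ (C mx.1, mx.2)) := by
    cases o <;> simp only [Option.elim, le_refl, Function.comp, hφ]
  simp only [codeword, Option.elim_map]
  rw [mean_prodLaw_eval_eval (isPMF_selectLaw hk hr C) huv fun o o' ↦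
    o.elim 0 ((fun a ↦ o'.elim 0 (φ a ∘ fun mx ↦ (C mx.1, mx.2))) ∘ fun mx ↦ (C mx.1, mx.2))]
  simp only [mean_elim, Function.comp_def]
  refine (mean_selectLaw_elim_le hk hr C fun mx ↦
    mean_nonneg (isPMF_selectLaw hk hr C v).1 (hφ' _)).trans ?_
  rw [mul_assoc]
  refine mul_le_mul_of_nonneg_left ?_ (by positivity)
  rw [Finset.mul_sum]
  refine Finset.sum_le_sum fun m _ ↦ ?_
  rw [Finset.sum_comm, Finset.mul_sum]
  refine Finset.sum_le_sum fun x _ ↦ ?_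
  rw [← Finset.mul_sum, mul_left_comm]
  exact mul_le_mul_of_nonneg_left (mean_selectLaw_elim_le hk hr C fun ny ↦ hφ _ _)
    (div_nonneg ((hk u).1 _) (hr.1 _))

-- The extra term accounts for the two source letters selecting the same cloud centre.
lemma mean_codeword_codeword_le (hM : 0 < M) (hk : IsKernel k) (hr : IsPMF r) (huv : u ≠ v)
    {φ : W × X → W × X → ℝ} (hφ : ∀ a b, 0 ≤ φ a b) :
    mean (codeLaw k r s) (fun c : Code M U W X ↦
      (codeword c u).elim 0 fun a ↦ (codeword c v).elim 0 fun b ↦ φ a b) ≤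
        mean (k u) fun a ↦ mean (k v) fun b ↦ (1 + ind (a.1 = b.1) / (M * r b.1)) * φ a b := by
  have hscale (A B : ℝ) : (M : ℝ)⁻¹ * (M : ℝ)⁻¹ * (M * A + M * M * B) = (M : ℝ)⁻¹ * A + B := by
    field_simp
  have hdiv (w : W) (x : X) (t : U) : 0 ≤ k t (w, x) / r w := div_nonneg ((hk t).1 _) (hr.1 _)
  set ψ : W → W × X → ℝ := fun w a ↦ ∑ y, k v (w, y) / r w * φ a (w, y) with hψ
  have hψ0 (w : W) (a : W × X) : 0 ≤ ψ w a :=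
    Finset.sum_nonneg fun y _ ↦ mul_nonneg (hdiv _ _ _) (hφ _ _)
  have hsame (a : W × X) : ψ a.1 a = mean (k v) fun b ↦ ind (a.1 = b.1) / r b.1 * φ a b := by
    simp only [hψ, mean, Fintype.sum_prod_type]
    rw [Fintype.sum_eq_single a.1 fun w hw ↦ by simp only [ind_of_false hw.symm, zero_div,
      zero_mul, mul_zero, Finset.sum_const_zero]]
    simp only [ind_of_true, ← mul_assoc, mul_one_div]
  calc _ ≤ (M : ℝ)⁻¹ * (M : ℝ)⁻¹ * mean (prodLaw fun _ ↦ r) fun C : Fin M → W ↦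
          ∑ m, ∑ m', ∑ x, k u (C m, x) / r (C m) * ψ (C m') (C m, x) :=
        mean_codeLaw_codeword_codeword_le hk hr huv hφ
    _ ≤ (M : ℝ)⁻¹ * (M : ℝ)⁻¹ *
          (M * mean r (fun w ↦ ∑ x, k u (w, x) / r w * ψ w (w, x)) +
            M * M * mean r fun w ↦ mean r fun w' ↦ ∑ x, k u (w, x) / r w * ψ w' (w, x)) := by
        exact mul_le_mul_of_nonneg_left (mean_prodLaw_sum_sum_le hr
          (φ := fun w w' ↦ ∑ x, k u (w, x) / r w * ψ w' (w, x)) fun w w' ↦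
            Finset.sum_nonneg fun x _ ↦ mul_nonneg (hdiv _ _ _) (hψ0 _ _)) (by positivity)
    _ = mean r fun w ↦ ∑ x, k u (w, x) / r w *
          ((M : ℝ)⁻¹ * ψ w (w, x) + mean r fun w' ↦ ψ w' (w, x)) := by
        rw [hscale]
        simp only [mul_add, Finset.sum_add_distrib, mean_add, mean_sum, mean_const_mul,
          mul_left_comm _ (M : ℝ)⁻¹, ← Finset.mul_sum]
    _ ≤ mean (k u) fun a ↦ (M : ℝ)⁻¹ * ψ a.1 a + mean r fun w' ↦ ψ w' a :=
        mean_sum_div_mul_le (φ := fun a ↦ (M : ℝ)⁻¹ * ψ a.1 a + mean r fun w' ↦ ψ w' a) hk hr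
          fun a ↦ add_nonneg (mul_nonneg (by positivity) (hψ0 _ _))
            (mean_nonneg hr.1 fun w ↦ hψ0 w a)
    _ ≤ _ := by
        refine mean_mono (hk u).1 fun a _ ↦ ?_
        rw [hsame, ← mean_const_mul]
        simp only [add_mul, one_mul, mean_add]
        rw [add_comm]
        refine add_le_add (mean_sum_div_mul_le hk hr (hφ a)) (le_of_eq ?_)
        congr! 2 with b
        field_simp

lemma mean_ind_codeword_eq_none (hk : IsKernel k) (hr : IsPMF r) :
    mean (codeLaw k r s) (fun c : Code M U W X ↦ ind (codeword c u = none)) =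
      mean (prodLaw fun _ ↦ r) fun C : Fin M → W ↦ selectLaw k r s C u none := by
  rw [mean_codeLaw]
  congr! 2 with C
  simp only [codeword, Option.map_eq_none_iff]
  rw [mean_prodLaw_eval (isPMF_selectLaw hk hr C) u fun o ↦ ind (o = none)]
  simp only [mean, ind, mul_ite, mul_one, mul_zero, Finset.sum_ite_eq', Finset.mem_univ, if_true]

-- Chebyshev's inequality for the sum of the weights: truncating the likelihood ratio at `s` keeps
-- its second moment below `s`.
lemma mean_ind_codeword_eq_none_le {δ : ℝ} (hM : 0 < M) (hδ : 0 < δ) (hk : IsKernel k)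
    (hr : IsPMF r) (hs : 0 ≤ s) (hrk : ∀ w, r w = 0 → fstLaw (k u) w = 0) :
    mean (codeLaw k r s) (fun c : Code M U W X ↦ ind (codeword c u = none)) ≤
      mean (k u) (fun a ↦ ind (¬fstLaw (k u) a.1 ≤ s * r a.1)) + δ + s / (M * δ) := by
  have hM' : (M : ℝ) ≠ 0 := by exact_mod_cast hM.ne'
  have hK : IsPMF (fstLaw (k u)) := (hk u).fstLaw
  set h := truncRatio (fstLaw (k u)) r s
  have hmean : mean r h = mean (k u) fun a ↦ ind (fstLaw (k u) a.1 ≤ s * r a.1) := by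
    rw [mean_truncRatio hr hrk, mean_fstLaw]
  have hle : mean r h ≤ 1 := by
    rw [hmean, ← (hk u).mean_const 1]; exact mean_mono (hk u).1 fun a _ ↦ ind_le_one _
  have hvar : mean (prodLaw fun _ : Fin M ↦ r)
      (fun C ↦ (∑ m, h (C m) - M * mean r h) ^ 2) ≤ M * s :=
    (mean_prodLaw_sq_sum_sub_le hr h).trans
      (mul_le_mul_of_nonneg_left (mean_sq_truncRatio_le hr hK hs) (by positivity))
  calc _ = mean (prodLaw fun _ ↦ r) fun C : Fin M → W ↦ selectLaw k r s C u none :=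
        mean_ind_codeword_eq_none hk hr
    _ ≤ mean (prodLaw fun _ ↦ r) fun C : Fin M → W ↦ (1 - mean r h + δ) +
          (δ⁻¹ * (M : ℝ)⁻¹ ^ 2) * (∑ m, h (C m) - M * mean r h) ^ 2 := by
        refine mean_mono (isPMF_prodLaw fun _ ↦ hr).1 fun C _ ↦
          (selectLaw_none_le hle hδ C).trans_eq ?_
        rw [sum_selectWeight, mul_assoc, ← mul_pow, mul_sub, inv_mul_cancel_left₀ hM']
    _ ≤ (1 - mean r h + δ) + (δ⁻¹ * (M : ℝ)⁻¹ ^ 2) * (M * s) := by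
        rw [mean_add, (isPMF_prodLaw fun _ ↦ hr).mean_const, mean_const_mul]
        gcongr
    _ = 1 - mean r h + δ + s / (M * δ) := by field_simp
    _ = _ := by
        congr 2
        rw [hmean, ← (hk u).mean_const 1, ← mean_sub]
        refine mean_congr fun a _ ↦ ?_
        by_cases ha : fstLaw (k u) a.1 ≤ s * r a.1
        · rw [ind_of_true ha, ind_of_false (not_not.2 ha), sub_self]
        · rw [ind_of_false ha, ind_of_true ha, sub_zero]

end RandomCode

section OneShot

variable {U U' W X Z X' A : Type*} {M M' : ℕ}

/-- The input to the channel when the encoder is `c`: a fixed letter `x₀` after a failure. -/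
def encode (x₀ : X) (c : Code M U W X) (u : U) : X := (codeword c u).elim x₀ Prod.snd

/-- A receiver's decoder for the test `T`: it outputs a source letter whose codeword passes the test
together with some cloud centre of the interferer's codebook `C'`. -/
noncomputable def testDecoder [Nonempty U] (T : U → W × X → Z → A → Prop) (c : Code M U W X)
    (C' : Fin M' → Z) (y : A) : U :=
  Classical.epsilon fun u ↦ ∃ a ∈ codeword c u, ∃ m, T u a (C' m) y

lemma ind_testDecoder_ne_le [Fintype U] [DecidableEq U] [Nonempty U] {T : U → W × X → Z → A → Prop}
    {c : Code M U W X} {c' : Code M' U' Z X'} {u : U} {u' : U'} {a : W × X} {b : Z × X'}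
    (ha : codeword c u = some a) (hb : codeword c' u' = some b) (y : A) :
    ind (testDecoder T c c'.1 y ≠ u) ≤ ind (¬T u a b.1 y) +
      ∑ m, ∑ v ∈ Finset.univ.erase u, (codeword c v).elim 0 fun d ↦ ind (T v d (c'.1 m) y) := by
  have hnn (m : Fin M') (v : U) : 0 ≤ (codeword c v).elim 0 fun d ↦ ind (T v d (c'.1 m) y) := by
    cases codeword c v <;> simp only [Option.elim, le_refl, ind_nonneg]
  have hsum : 0 ≤ ∑ m, ∑ v ∈ Finset.univ.erase u,
      (codeword c v).elim 0 fun d ↦ ind (T v d (c'.1 m) y) :=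
    Finset.sum_nonneg fun m _ ↦ Finset.sum_nonneg fun v _ ↦ hnn m v
  by_cases hT : T u a b.1 y
  swap
  · rw [ind_of_true hT]
    exact (ind_le_one _).trans (le_add_of_nonneg_right hsum)
  rw [ind_of_false (not_not.2 hT), zero_add]
  by_cases hne : testDecoder T c c'.1 y ≠ u
  swap
  · rwa [ind_of_false hne]
  obtain ⟨mx, -, hmx⟩ : ∃ mx, c'.2 u' = some mx ∧ (c'.1 mx.1, mx.2) = b := by
    simpa only [codeword, Option.map_eq_some_iff] using hb
  obtain ⟨d, hd, m, hm⟩ : ∃ d ∈ codeword c (testDecoder T c c'.1 y),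
      ∃ m, T (testDecoder T c c'.1 y) d (c'.1 m) y :=
    Classical.epsilon_spec (p := fun u ↦ ∃ a ∈ codeword c u, ∃ m, T u a (c'.1 m) y)
      ⟨u, a, ha, mx.1, by rwa [← hmx] at hT⟩
  calc ind (testDecoder T c c'.1 y ≠ u)
      ≤ (codeword c (testDecoder T c c'.1 y)).elim 0
          fun d ↦ ind (T (testDecoder T c c'.1 y) d (c'.1 m) y) := by
        rw [Option.mem_def.1 hd, Option.elim, ind_of_true hm]; exact ind_le_one _
    _ ≤ ∑ v ∈ Finset.univ.erase u, (codeword c v).elim 0 fun d ↦ ind (T v d (c'.1 m) y) :=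
        Finset.single_le_sum (fun v _ ↦ hnn m v)
          (Finset.mem_erase.2 ⟨hne, Finset.mem_univ _⟩)
    _ ≤ _ := Finset.single_le_sum (f := fun m ↦ ∑ v ∈ Finset.univ.erase u,
          (codeword c v).elim 0 fun d ↦ ind (T v d (c'.1 m) y))
          (fun m _ ↦ Finset.sum_nonneg fun v _ ↦ hnn m v) (Finset.mem_univ m)

variable [Fintype U] [Fintype U'] [Fintype A]

/-- `Γ u' x x'` is the joint weight of the interfering source letter `u'`, which has law `p'`, and
of the receiver's output (channel output and side information on `u'`) for inputs `x` and `x'`. -/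
structure IsObservation (p' : U' → ℝ) (Γ : U' → X → X' → A → ℝ) : Prop where
  sum_eq : ∀ u' x x', ∑ y, Γ u' x x' y = p' u'
  nonneg : ∀ u' x x' y, 0 ≤ Γ u' x x' y

/-- The probability that the receiver with observation law `Γ` and decoder `g` misses its source
letter of law `p`, when the encoders are `f` and `f'`. -/
noncomputable def errProb (p : U → ℝ) (Γ : U' → X → X' → A → ℝ) (f : U → X) (f' : U' → X')
    (g : A → U) : ℝ :=
  mean p fun u ↦ ∑ u', ∑ y, Γ u' (f u) (f' u') y * ind (g y ≠ u)

variable {p : U → ℝ} {p' : U' → ℝ} {Γ : U' → X → X' → A → ℝ}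

lemma errProb_le [DecidableEq U] [Nonempty U] (hp : IsPMF p) (hp' : IsPMF p')
    (hΓ : IsObservation p' Γ) (T : U → W × X → Z → A → Prop) (x₀ : X) (x₀' : X')
    (c : Code M U W X) (c' : Code M' U' Z X') :
    errProb p Γ (encode x₀ c) (encode x₀' c') (testDecoder T c c'.1) ≤
      mean p (fun u ↦ ind (codeword c u = none)) + mean p' (fun u' ↦ ind (codeword c' u' = none)) +
        mean p fun u ↦ (codeword c u).elim 0 fun a ↦ ∑ u', (codeword c' u').elim 0 fun b ↦
          ∑ y, Γ u' a.2 b.2 y * (ind (¬T u a b.1 y) + ∑ m, ∑ v ∈ Finset.univ.erase u,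
            (codeword c v).elim 0 fun d ↦ ind (T v d (c'.1 m) y)) := by
  have htriv (u : U) (u' : U') (x : X) (x' : X') :
      ∑ y, Γ u' x x' y * ind (testDecoder T c c'.1 y ≠ u) ≤ p' u' := by
    rw [← hΓ.sum_eq u' x x']
    exact Finset.sum_le_sum fun y _ ↦ mul_le_of_le_one_right (hΓ.nonneg _ _ _ _) (ind_le_one _)
  rw [← hp.mean_const (mean p' _), ← mean_add, ← mean_add]
  refine mean_mono hp.1 fun u _ ↦ ?_
  have hmiss : 0 ≤ mean p' fun u' ↦ ind (codeword c' u' = none) :=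
    mean_nonneg hp'.1 fun _ ↦ ind_nonneg _
  rcases ha : codeword c u with _ | a
  · rw [ind_of_true rfl, Option.elim, add_zero]
    refine le_add_of_le_of_nonneg ?_ hmiss
    exact (Finset.sum_le_sum fun u' _ ↦ htriv u u' _ _).trans_eq hp'.2
  rw [ind_of_false (Option.some_ne_none a), zero_add, Option.elim, mean,
    ← Finset.sum_add_distrib]
  refine Finset.sum_le_sum fun u' _ ↦ ?_
  rcases hb : codeword c' u' with _ | b
  · simpa only [ind_of_true, mul_one, Option.elim, add_zero] using htriv u u' _ _
  rw [ind_of_false (Option.some_ne_none b), mul_zero, zero_add, Option.elim]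
  simp only [encode, ha, hb, Option.elim]
  exact Finset.sum_le_sum fun y _ ↦
    mul_le_mul_of_nonneg_left (ind_testDecoder_ne_le ha hb y) (hΓ.nonneg _ _ _ _)

variable [Fintype X'] [Fintype Z]

/-- The joint law of the interferer's cloud centre and the receiver's output for the input `x`,
when the interferer uses the test channel `k'`. -/
noncomputable def outputLaw (k' : U' → Z × X' → ℝ) (Γ : U' → X → X' → A → ℝ) (x : X) (z : Z)
    (y : A) : ℝ :=
  ∑ u', ∑ x', k' u' (z, x') * Γ u' x x' y

variable {k' : U' → Z × X' → ℝ} {r' : Z → ℝ} {s' : ℝ}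

lemma outputLaw_nonneg (hk' : IsKernel k') (hΓ : IsObservation p' Γ) (x : X) (z : Z) (y : A) :
    0 ≤ outputLaw k' Γ x z y :=
  Finset.sum_nonneg fun _ _ ↦ Finset.sum_nonneg fun _ _ ↦
    mul_nonneg ((hk' _).1 _) (hΓ.nonneg _ _ _ _)

/-- An upper bound for the expected number of occurrences of `z` in the interferer's codebook
jointly with the output `y`, for the input `x`: the selected centre, and `M'` fresh ones. -/
noncomputable def listLaw (G : X → Z → A → ℝ) (r' : Z → ℝ) (M' : ℕ) (x : X) (z : Z) (y : A) : ℝ :=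
  G x z y + M' * (r' z * ∑ z', G x z' y)

omit [Fintype A] in
lemma listLaw_nonneg {G : X → Z → A → ℝ} (hG : ∀ x z y, 0 ≤ G x z y) (hr' : IsPMF r') (x : X)
    (z : Z) (y : A) : 0 ≤ listLaw G r' M' x z y :=
  add_nonneg (hG _ _ _) (mul_nonneg (Nat.cast_nonneg _)
    (mul_nonneg (hr'.1 _) (Finset.sum_nonneg fun _ _ ↦ hG _ _ _)))

lemma sum_mean_eq_sum_outputLaw (k' : U' → Z × X' → ℝ) (Γ : U' → X → X' → A → ℝ) (x : X)
    (f : Z → A → ℝ) :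
    ∑ u', mean (k' u') (fun b ↦ ∑ y, Γ u' x b.2 y * f b.1 y) =
      ∑ z, ∑ y, outputLaw k' Γ x z y * f z y := by
  simp only [mean, outputLaw, Fintype.sum_prod_type, Finset.sum_mul, Finset.mul_sum, mul_assoc]
  rw [Finset.sum_comm]
  refine Finset.sum_congr rfl fun z _ ↦ ?_
  rw [Finset.sum_comm (s := (Finset.univ : Finset A))]
  exact Finset.sum_congr rfl fun u' _ ↦ Finset.sum_comm

lemma sum_outputLaw (hp' : IsPMF p') (hk' : IsKernel k') (hΓ : IsObservation p' Γ) (x : X) :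
    ∑ z, ∑ y, outputLaw k' Γ x z y = 1 := by
  have h := sum_mean_eq_sum_outputLaw k' Γ x fun _ _ ↦ 1
  simp only [mul_one, hΓ.sum_eq, (hk' _).mean_const, hp'.2] at h
  exact h.symm

variable [DecidableEq U']

lemma sum_mean_codeword_le (hM' : 0 < M') (hk' : IsKernel k') (hr' : IsPMF r')
    (hΓ : IsObservation p' Γ) (x : X) {f : Z → A → ℝ} (hf : ∀ z y, 0 ≤ f z y) :
    ∑ u', mean (codeLaw k' r' s') (fun c' : Code M' U' Z X' ↦
      (codeword c' u').elim 0 fun b ↦ ∑ y, Γ u' x b.2 y * f b.1 y) ≤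
        ∑ z, ∑ y, outputLaw k' Γ x z y * f z y := by
  rw [← sum_mean_eq_sum_outputLaw]
  exact Finset.sum_le_sum fun u' _ ↦ mean_codeword_le hM' hk' hr' fun b ↦
    Finset.sum_nonneg fun y _ ↦ mul_nonneg (hΓ.nonneg _ _ _ _) (hf _ _)

lemma sum_mean_codeword_codebook_le (hM' : 0 < M') (hk' : IsKernel k') (hr' : IsPMF r')
    (hΓ : IsObservation p' Γ) (x : X) {f : Z → A → ℝ} (hf : ∀ z y, 0 ≤ f z y) :
    ∑ u', mean (codeLaw k' r' s') (fun c' : Code M' U' Z X' ↦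
      (codeword c' u').elim 0 fun b ↦ ∑ y, Γ u' x b.2 y * ∑ m, f (c'.1 m) y) ≤
        ∑ z, ∑ y, listLaw (outputLaw k' Γ) r' M' x z y * f z y := by
  have hlist : ∑ u', mean (k' u') (fun b ↦ ∑ y, Γ u' x b.2 y * (f b.1 y +
      M' * mean r' fun z ↦ f z y)) = ∑ z, ∑ y, listLaw (outputLaw k' Γ) r' M' x z y * f z y := by
    rw [sum_mean_eq_sum_outputLaw k' Γ x fun z y ↦ f z y + M' * mean r' fun z ↦ f z y]
    simp only [listLaw, mul_add, add_mul, Finset.sum_add_distrib]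
    congr 1
    rw [Finset.sum_comm, Finset.sum_comm (s := (Finset.univ : Finset Z))]
    refine Finset.sum_congr rfl fun y _ ↦ ?_
    rw [← Finset.sum_mul, mean, Finset.mul_sum, Finset.mul_sum]
    exact Finset.sum_congr rfl fun z _ ↦ by ring
  rw [← hlist]
  refine Finset.sum_le_sum fun u' _ ↦ ?_
  have h := mean_codeword_sum_codebook_le (s := s') (u := u') hM' hk' hr'
    (φ := fun b z ↦ ∑ y, Γ u' x b.2 y * f z y) fun b z ↦
      Finset.sum_nonneg fun y _ ↦ mul_nonneg (hΓ.nonneg _ _ _ _) (hf _ _)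
  refine (le_of_eq ?_).trans (h.trans_eq ?_)
  · congr! 4 with c b
    simp only [Finset.mul_sum]
    exact Finset.sum_comm
  · congr! 2 with b
    simp only [mean_sum, mean_const_mul, mul_add, Finset.sum_add_distrib, Finset.mul_sum]
    congr! 2 with y
    ring

lemma sum_mean_codeword_test_le (hM' : 0 < M') (hk' : IsKernel k') (hr' : IsPMF r')
    (hΓ : IsObservation p' Γ) (x : X) {f g : Z → A → ℝ} (hf : ∀ z y, 0 ≤ f z y)
    (hg : ∀ z y, 0 ≤ g z y) :
    ∑ u', mean (codeLaw k' r' s') (fun c' : Code M' U' Z X' ↦ (codeword c' u').elim 0 fun b ↦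
      ∑ y, Γ u' x b.2 y * (f b.1 y + ∑ m, g (c'.1 m) y)) ≤
        ∑ z, ∑ y, outputLaw k' Γ x z y * f z y +
          ∑ z, ∑ y, listLaw (outputLaw k' Γ) r' M' x z y * g z y := by
  refine le_of_eq_of_le ?_ (add_le_add (sum_mean_codeword_le (s' := s') hM' hk' hr' hΓ x hf)
    (sum_mean_codeword_codebook_le (s' := s') hM' hk' hr' hΓ x hg))
  rw [← Finset.sum_add_distrib]
  refine Finset.sum_congr rfl fun u' _ ↦ ?_
  rw [← mean_add]
  refine mean_congr fun c' _ ↦ ?_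
  cases codeword c' u' <;> simp only [Option.elim, add_zero, mul_add, Finset.sum_add_distrib]

lemma mean_interferer_errProb_le [DecidableEq U] [Nonempty U] (hM' : 0 < M') (hp : IsPMF p)
    (hp' : IsPMF p') (hΓ : IsObservation p' Γ) (hk' : IsKernel k') (hr' : IsPMF r')
    (T : U → W × X → Z → A → Prop) (x₀ : X) (x₀' : X') (c : Code M U W X) :
    mean (codeLaw k' r' s') (fun c' : Code M' U' Z X' ↦
      errProb p Γ (encode x₀ c) (encode x₀' c') (testDecoder T c c'.1)) ≤
      mean p (fun u ↦ ind (codeword c u = none)) +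
      mean p' (fun u' ↦ mean (codeLaw k' r' s') fun c' : Code M' U' Z X' ↦
        ind (codeword c' u' = none)) +
      (mean p (fun u ↦ (codeword c u).elim 0 fun a ↦
        ∑ z, ∑ y, outputLaw k' Γ a.2 z y * ind (¬T u a z y)) +
      mean p fun u ↦ (codeword c u).elim 0 fun a ↦ ∑ z, ∑ y,
        listLaw (outputLaw k' Γ) r' M' a.2 z y * ∑ v ∈ Finset.univ.erase u,
          (codeword c v).elim 0 fun d ↦ ind (T v d z y)) := by
  have hcode' : IsPMF (codeLaw k' r' s' : Code M' U' Z X' → ℝ) := isPMF_codeLaw hk' hr'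
  have helim (v : U) (z : Z) (y : A) : 0 ≤ (codeword c v).elim 0 fun d ↦ ind (T v d z y) := by
    cases codeword c v <;> simp only [Option.elim, le_refl, ind_nonneg]
  refine (mean_mono hcode'.1 fun c' _ ↦ errProb_le hp hp' hΓ T x₀ x₀' c c').trans ?_
  rw [mean_add, mean_add, hcode'.mean_const, mean_comm, ← mean_add]
  refine add_le_add le_rfl ?_
  rw [mean_comm]
  refine mean_mono hp.1 fun u _ ↦ ?_
  rcases codeword c u with _ | a
  · simp only [Option.elim, mean, mul_zero, Finset.sum_const_zero, add_zero, le_refl]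
  simp only [Option.elim_some, mean_sum]
  exact sum_mean_codeword_test_le hM' hk' hr' hΓ a.2 (f := fun z y ↦ ind (¬T u a z y))
    (g := fun z y ↦ ∑ v ∈ Finset.univ.erase u, (codeword c v).elim 0 fun d ↦ ind (T v d z y))
    (fun _ _ ↦ ind_nonneg _) fun z y ↦ Finset.sum_nonneg fun v _ ↦ helim v z y

variable [Fintype W] [Fintype X] {k : U → W × X → ℝ} {r : W → ℝ} {s : ℝ}

/-- The law of the cloud centre and input that the test channel `k` produces from the source `p`. -/
noncomputable def inputLaw (p : U → ℝ) (k : U → W × X → ℝ) (a : W × X) : ℝ := mean p fun u ↦ k u a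

/-- The weight of the cloud centres `z` and the output `y` when a wrong source letter is tested
whose codeword has cloud centre `w`, so that the true codeword either has the same centre or is
independent of `w`. -/
noncomputable def confusionLaw (κ : W × X → ℝ) (G : X → Z → A → ℝ) (r : W → ℝ) (r' : Z → ℝ)
    (M M' : ℕ) (w : W) (z : Z) (y : A) : ℝ :=
  mean κ fun a ↦ (1 + ind (a.1 = w) / (M * r w)) * listLaw G r' M' a.2 z y

lemma mean_inputLaw (p : U → ℝ) (k : U → W × X → ℝ) (f : W × X → ℝ) :
    mean (inputLaw p k) f = mean p fun u ↦ mean (k u) f := by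
  simp only [inputLaw, mean, Finset.sum_mul, Finset.mul_sum, mul_assoc]
  exact Finset.sum_comm

lemma isPMF_inputLaw (hp : IsPMF p) (hk : IsKernel k) : IsPMF (inputLaw p k) := by
  refine ⟨fun a ↦ mean_nonneg hp.1 fun u ↦ (hk u).1 a, ?_⟩
  have h := mean_inputLaw p k fun _ ↦ 1
  simp only [(hk _).mean_const, hp.mean_const] at h
  simpa only [mean, mul_one] using h

variable [DecidableEq U]

omit [Fintype W] [Fintype X] [DecidableEq U] [Fintype U] in
lemma elim_sum_sum_mul_sum_elim (o : Option (W × X)) (o' : U → Option (W × X)) (S : Finset U)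
    (K : W × X → Z → A → ℝ) (f : U → W × X → Z → A → ℝ) :
    (o.elim 0 fun a ↦ ∑ z, ∑ y, K a z y * ∑ v ∈ S, (o' v).elim 0 fun d ↦ f v d z y) =
      ∑ v ∈ S, o.elim 0 fun a ↦ (o' v).elim 0 fun d ↦ ∑ z, ∑ y, K a z y * f v d z y := by
  rcases o with _ | a
  · simp only [Option.elim, Finset.sum_const_zero]
  simp only [Option.elim, Finset.mul_sum]
  rw [Finset.sum_congr rfl fun z _ ↦ Finset.sum_comm, Finset.sum_comm]
  refine Finset.sum_congr rfl fun v _ ↦ ?_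
  rcases o' v with _ | d <;> simp only [mul_zero, Finset.sum_const_zero]

lemma mean_competitors_le (hM : 0 < M) (hp : IsPMF p) (hk : IsKernel k) (hr : IsPMF r)
    (hr' : IsPMF r') {G : X → Z → A → ℝ} (hG : ∀ x z y, 0 ≤ G x z y)
    (T : U → W × X → Z → A → Prop) :
    mean (codeLaw k r s) (fun c : Code M U W X ↦ mean p fun u ↦ (codeword c u).elim 0 fun a ↦
      ∑ z, ∑ y, listLaw G r' M' a.2 z y * ∑ v ∈ Finset.univ.erase u,
        (codeword c v).elim 0 fun d ↦ ind (T v d z y)) ≤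
      ∑ v, mean (k v) fun d ↦
        ∑ z, ∑ y, confusionLaw (inputLaw p k) G r r' M M' d.1 z y * ind (T v d z y) := by
  set K : X → Z → A → ℝ := listLaw G r' M'
  have hK0 (x : X) (z : Z) (y : A) : 0 ≤ K x z y := listLaw_nonneg hG hr' x z y
  set φ : U → W × X → W × X → ℝ := fun v a d ↦ ∑ z, ∑ y, K a.2 z y * ind (T v d z y) with hφ
  have hφ0 (v : U) (a d : W × X) : 0 ≤ φ v a d := Finset.sum_nonneg fun z _ ↦
    Finset.sum_nonneg fun y _ ↦ mul_nonneg (hK0 _ _ _) (ind_nonneg _)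
  have hpair (u v : U) : 0 ≤ mean (k u) fun a ↦ mean (k v) fun d ↦
      (1 + ind (a.1 = d.1) / (M * r d.1)) * φ v a d := by
    refine mean_nonneg (hk u).1 fun a ↦ mean_nonneg (hk v).1 fun d ↦ mul_nonneg ?_ (hφ0 _ _ _)
    exact add_nonneg zero_le_one
      (div_nonneg (ind_nonneg _) (mul_nonneg (Nat.cast_nonneg _) (hr.1 _)))
  calc _ = mean p fun u ↦ ∑ v ∈ Finset.univ.erase u, mean (codeLaw k r s) fun c : Code M U W X ↦
        (codeword c u).elim 0 fun a ↦ (codeword c v).elim 0 fun d ↦ φ v a d := by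
        simp only [elim_sum_sum_mul_sum_elim (K := fun a z y ↦ K a.2 z y), hφ]
        rw [mean_comm]
        simp only [mean_sum]
    _ ≤ mean p fun u ↦ ∑ v, mean (k u) fun a ↦ mean (k v) fun d ↦
        (1 + ind (a.1 = d.1) / (M * r d.1)) * φ v a d := by
        refine mean_mono hp.1 fun u _ ↦ ?_
        refine (Finset.sum_le_sum fun v hv ↦ mean_codeword_codeword_le hM hk hr
          (Finset.ne_of_mem_erase hv).symm (hφ0 v)).trans ?_
        exact Finset.sum_le_sum_of_subset_of_nonneg (Finset.erase_subset _ _)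
          fun v _ _ ↦ hpair u v
    _ = _ := by
        rw [mean_sum]
        refine Finset.sum_congr rfl fun v _ ↦ ?_
        rw [← mean_inputLaw, mean_comm]
        congr! 2 with d
        simp only [confusionLaw, hφ, mean, Finset.mul_sum, Finset.sum_mul, mul_assoc]
        rw [Finset.sum_comm]
        exact Finset.sum_congr rfl fun z _ ↦ Finset.sum_comm

lemma mean_errProb_le_of_test [Nonempty U] (hM : 0 < M) (hM' : 0 < M') (hp : IsPMF p)
    (hp' : IsPMF p') (hΓ : IsObservation p' Γ) (hk : IsKernel k) (hk' : IsKernel k') (hr : IsPMF r)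
    (hr' : IsPMF r') (T : U → W × X → Z → A → Prop) (x₀ : X) (x₀' : X') :
    mean (codeLaw k r s) (fun c : Code M U W X ↦ mean (codeLaw k' r' s') fun c' : Code M' U' Z X' ↦
      errProb p Γ (encode x₀ c) (encode x₀' c') (testDecoder T c c'.1)) ≤
      mean p (fun u ↦ mean (codeLaw k r s) fun c : Code M U W X ↦ ind (codeword c u = none)) +
      mean p' (fun u' ↦ mean (codeLaw k' r' s') fun c' : Code M' U' Z X' ↦
        ind (codeword c' u' = none)) +
      (mean p (fun u ↦ mean (k u) fun a ↦
        ∑ z, ∑ y, outputLaw k' Γ a.2 z y * ind (¬T u a z y)) +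
      ∑ v, mean (k v) fun d ↦ ∑ z, ∑ y,
        confusionLaw (inputLaw p k) (outputLaw k' Γ) r r' M M' d.1 z y * ind (T v d z y)) := by
  have hG := outputLaw_nonneg hk' hΓ
  have hcode : IsPMF (codeLaw k r s : Code M U W X → ℝ) := isPMF_codeLaw hk hr
  refine (mean_mono hcode.1 fun c _ ↦
    mean_interferer_errProb_le hM' hp hp' hΓ hk' hr' T x₀ x₀' c).trans ?_
  rw [mean_add, mean_add, mean_add, hcode.mean_const, mean_comm]
  refine add_le_add le_rfl (add_le_add ?_ (mean_competitors_le hM hp hk hr hr' hG T))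
  rw [mean_comm]
  exact mean_mono hp.1 fun u _ ↦ mean_codeword_le hM hk hr fun a ↦ Finset.sum_nonneg fun z _ ↦
    Finset.sum_nonneg fun y _ ↦ mul_nonneg (hG _ _ _) (ind_nonneg _)

/-- The receiver's likelihood test for the source letter `u`, its codeword `a` and the interferer's
cloud centre `z` at the output `y`. -/
def LikelihoodTest (p : U → ℝ) (κ : W × X → ℝ) (G : X → Z → A → ℝ) (r : W → ℝ) (r' : Z → ℝ)
    (M M' : ℕ) (ε : ℝ) (u : U) (a : W × X) (z : Z) (y : A) : Prop :=
  confusionLaw κ G r r' M M' a.1 z y ≤ ε * (p u * G a.2 z y)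

lemma mean_errProb_le [Nonempty U] (hM : 0 < M) (hM' : 0 < M') (hp : IsPMF p)
    (hp' : IsPMF p') (hΓ : IsObservation p' Γ) (hk : IsKernel k) (hk' : IsKernel k') (hr : IsPMF r)
    (hr' : IsPMF r') {ε : ℝ} (hε : 0 ≤ ε) (x₀ : X) (x₀' : X') :
    mean (codeLaw k r s) (fun c : Code M U W X ↦ mean (codeLaw k' r' s') fun c' : Code M' U' Z X' ↦
      errProb p Γ (encode x₀ c) (encode x₀' c') (testDecoder
        (LikelihoodTest p (inputLaw p k) (outputLaw k' Γ) r r' M M' ε) c c'.1)) ≤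
      mean p (fun u ↦ mean (codeLaw k r s) fun c : Code M U W X ↦ ind (codeword c u = none)) +
      mean p' (fun u' ↦ mean (codeLaw k' r' s') fun c' : Code M' U' Z X' ↦
        ind (codeword c' u' = none)) +
      (mean p (fun u ↦ mean (k u) fun a ↦ ∑ z, ∑ y, outputLaw k' Γ a.2 z y *
        ind (¬LikelihoodTest p (inputLaw p k) (outputLaw k' Γ) r r' M M' ε u a z y)) + ε) := by
  refine (mean_errProb_le_of_test hM hM' hp hp' hΓ hk hk' hr hr' _ x₀ x₀').trans ?_
  refine add_le_add le_rfl (add_le_add le_rfl ?_)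
  have hε1 : ∑ v, mean (k v) (fun d ↦ ∑ z, ∑ y, ε * (p v * outputLaw k' Γ d.2 z y)) = ε := by
    simp only [← Finset.mul_sum, sum_outputLaw hp' hk' hΓ, (hk _).mean_const, mul_one, hp.2]
  conv_rhs => rw [← hε1]
  refine Finset.sum_le_sum fun v _ ↦ mean_mono (hk v).1 fun d _ ↦ Finset.sum_le_sum fun z _ ↦
    Finset.sum_le_sum fun y _ ↦ ?_
  by_cases hT : LikelihoodTest p (inputLaw p k) (outputLaw k' Γ) r r' M M' ε v d z y
  · rwa [ind_of_true hT, mul_one]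
  · rw [ind_of_false hT, mul_zero]
    exact mul_nonneg hε (mul_nonneg (hp.1 v) (outputLaw_nonneg hk' hΓ _ _ _))

/-- The joint law of both cloud centres and the receiver's output, when the receiver's own cloud
centre and input have law `κ`. -/
noncomputable def centreLaw (κ : W × X → ℝ) (G : X → Z → A → ℝ) (w : W) (z : Z) (y : A) : ℝ :=
  ∑ x, κ (w, x) * G x z y

omit [Fintype A] in
lemma confusionLaw_eq (κ : W × X → ℝ) (G : X → Z → A → ℝ) (r : W → ℝ) (r' : Z → ℝ)
    (M M' : ℕ) (w : W) (z : Z) (y : A) :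
    confusionLaw κ G r r' M M' w z y = (centreLaw κ G w z y +
      M' * (r' z * ∑ z', centreLaw κ G w z' y)) / (M * r w) +
      (∑ w', centreLaw κ G w' z y + M' * (r' z * ∑ w', ∑ z', centreLaw κ G w' z' y)) := by
  have hsame : mean κ (fun a ↦ ind (a.1 = w) * listLaw G r' M' a.2 z y) =
      centreLaw κ G w z y + M' * (r' z * ∑ z', centreLaw κ G w z' y) := by
    rw [mean, Fintype.sum_prod_type, Fintype.sum_eq_single w fun w' hw' ↦ by
      simp only [ind_of_false hw', zero_mul, mul_zero, Finset.sum_const_zero]]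
    simp only [ind_of_true, one_mul, listLaw, mul_add, Finset.sum_add_distrib, centreLaw,
      mul_left_comm (κ _), ← Finset.mul_sum]
    rw [Finset.sum_comm]
    simp only [Finset.mul_sum]
  have hall : mean κ (fun a ↦ listLaw G r' M' a.2 z y) =
      ∑ w', centreLaw κ G w' z y + M' * (r' z * ∑ w', ∑ z', centreLaw κ G w' z' y) := by
    simp only [mean, Fintype.sum_prod_type, listLaw, mul_add, Finset.sum_add_distrib, centreLaw,
      mul_left_comm (κ _), ← Finset.mul_sum]
    congr! 4 with w'
    rw [Finset.sum_comm]
    simp only [Finset.mul_sum]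
  simp only [confusionLaw, add_mul, one_mul, mean_add, div_eq_inv_mul,
    mul_assoc, mean_const_mul, hsame, hall]
  exact add_comm _ _

omit [Fintype U] [Fintype A] [DecidableEq U] in
-- The four summands of `confusionLaw_eq` correspond to the four ways in which the decoder can err:
-- the competing source letter has the true cloud centre or not, and so has the interferer.
lemma ind_not_likelihoodTest_le {κ : W × X → ℝ} {G : X → Z → A → ℝ} (hM : 0 < M) {ε : ℝ} {u : U}
    {a : W × X} {z : Z} {y : A} (ha : 0 < r a.1) :
    ind (¬LikelihoodTest p κ G r r' M M' ε u a z y) ≤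
      ind (ε / 4 * M * (r a.1 * p u * G a.2 z y) < centreLaw κ G a.1 z y) +
      ind (ε / 4 * M * (r a.1 * p u * G a.2 z y) < M' * (r' z * ∑ z', centreLaw κ G a.1 z' y)) +
      ind (ε / 4 * (p u * G a.2 z y) < ∑ w, centreLaw κ G w z y) +
      ind (ε / 4 * (p u * G a.2 z y) < M' * (r' z * ∑ w, ∑ z', centreLaw κ G w z' y)) := by
  set a₁ := ε / 4 * M * (r a.1 * p u * G a.2 z y)
  set a₂ := ε / 4 * (p u * G a.2 z y)
  have hor : ¬LikelihoodTest p κ G r r' M M' ε u a z y →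
      (a₁ < centreLaw κ G a.1 z y ∨ a₁ < M' * (r' z * ∑ z', centreLaw κ G a.1 z' y)) ∨
        a₂ < ∑ w, centreLaw κ G w z y ∨ a₂ < M' * (r' z * ∑ w, ∑ z', centreLaw κ G w z' y) := by
    contrapose!
    rintro ⟨⟨h₁, h₂⟩, h₃, h₄⟩
    have hMr : 0 < M * r a.1 := mul_pos (Nat.cast_pos.2 hM) ha
    have hsame : (centreLaw κ G a.1 z y + M' * (r' z * ∑ z', centreLaw κ G a.1 z' y)) /
        (M * r a.1) ≤ a₂ + a₂ := by
      rw [div_le_iff₀ hMr]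
      exact (add_le_add h₁ h₂).trans_eq (by ring)
    rw [LikelihoodTest, confusionLaw_eq]
    exact (add_le_add hsame (add_le_add h₃ h₄)).trans_eq (by ring)
  refine (ind_mono hor).trans ((ind_or_le _ _).trans ?_)
  rw [add_assoc]
  exact add_le_add (ind_or_le _ _) (ind_or_le _ _)

end OneShot

section Information

variable {Ω Ω' α β γ δ ε : Type*} [Fintype Ω] {P : Ω → ℝ}

lemma pr_pos (hP : ∀ ω, 0 ≤ P ω) (X : Ω → α) {ω : Ω} (hω : P ω ≠ 0) : 0 < pr P X (X ω) := by
  refine ((hP ω).lt_of_ne' hω).trans_le ?_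
  have h := Finset.single_le_sum (f := fun ω' ↦ if X ω' = X ω then P ω' else 0)
    (fun ω' _ ↦ by split_ifs <;> first | exact hP ω' | rfl) (Finset.mem_univ ω)
  rwa [if_pos rfl] at h

lemma pr_nonneg (hP : ∀ ω, 0 ≤ P ω) (X : Ω → α) (x : α) : 0 ≤ pr P X x :=
  Finset.sum_nonneg fun ω _ ↦ by split_ifs <;> first | exact hP ω | rfl

lemma sum_pr_prod (P : Ω → ℝ) [Fintype α] (X : Ω → α) (Z : Ω → γ) (z : γ) :
    ∑ x, pr P (fun ω ↦ (X ω, Z ω)) (x, z) = pr P Z z := by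
  simp only [pr, Prod.mk.injEq, ite_and]
  rw [Finset.sum_comm]
  simp only [Finset.sum_ite_eq, Finset.mem_univ, if_true]

lemma mean_comp [Fintype α] (P : Ω → ℝ) (X : Ω → α) (f : α → ℝ) :
    mean P (fun ω ↦ f (X ω)) = mean (pr P X) f := by
  simp only [mean, pr, Finset.sum_mul, ite_mul, zero_mul]
  rw [Finset.sum_comm]
  simp only [Finset.sum_ite_eq, Finset.mem_univ, if_true]

lemma pr_comp [Fintype Ω'] (P : Ω → ℝ) (T : Ω → Ω') (X : Ω' → α) (x : α) :
    pr P (fun ω ↦ X (T ω)) x = pr (pr P T) X x := by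
  have h := mean_comp P T fun ω' ↦ ind (X ω' = x)
  simpa only [mean, ind, pr, mul_ite, mul_one, mul_zero] using h

lemma ent_comp [Fintype Ω'] [Fintype α] (P : Ω → ℝ) (T : Ω → Ω') (X : Ω' → α) :
    ent P (fun ω ↦ X (T ω)) = ent (pr P T) X := by
  simp only [ent, pr_comp]

lemma cmi_comp [Fintype Ω'] [Fintype α] [Fintype β] [Fintype γ] (P : Ω → ℝ) (T : Ω → Ω')
    (X : Ω' → α) (Y : Ω' → β) (Z : Ω' → γ) :
    cmi P (fun ω ↦ X (T ω)) (fun ω ↦ Y (T ω)) (fun ω ↦ Z (T ω)) = cmi (pr P T) X Y Z := by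
  simp only [cmi, ← ent_comp]

lemma ent_equiv [Fintype α] [Fintype β] (e : α ≃ β) (P : Ω → ℝ) (X : Ω → α) :
    ent P (fun ω ↦ e (X ω)) = ent P X := by
  refine (Fintype.sum_equiv e _ _ fun x ↦ ?_).symm
  simp only [pr, e.apply_eq_iff_eq]

lemma cmi_left_comm [Fintype α] [Fintype β] [Fintype γ] [Fintype δ] [Fintype ε] (P : Ω → ℝ)
    (X : Ω → α) (Y : Ω → β) (A : Ω → γ) (B : Ω → δ) (C : Ω → ε) :
    cmi P X Y (fun ω ↦ (A ω, B ω, C ω)) = cmi P X Y fun ω ↦ (B ω, A ω, C ω) := by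
  let e : δ × γ × ε ≃ γ × δ × ε :=
    ⟨fun (b, a, c) ↦ (a, b, c), fun (a, b, c) ↦ (b, a, c), fun _ ↦ rfl, fun _ ↦ rfl⟩
  have hX := ent_equiv ((Equiv.refl α).prodCongr e) P fun ω ↦ (X ω, B ω, A ω, C ω)
  have hY := ent_equiv ((Equiv.refl β).prodCongr e) P fun ω ↦ (Y ω, B ω, A ω, C ω)
  have hXY := ent_equiv ((Equiv.refl α).prodCongr ((Equiv.refl β).prodCongr e)) P
    fun ω ↦ (X ω, Y ω, B ω, A ω, C ω)
  exact congrArg₂ (· - ·) (congrArg₂ (· - ·) (congrArg₂ (· + ·) hX hY) hXY)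
    (ent_equiv e P fun ω ↦ (B ω, A ω, C ω))

variable [Fintype α] [Fintype β] [Fintype γ]

lemma mean_logb_pr (P : Ω → ℝ) (X : Ω → α) :
    mean P (fun ω ↦ logb 2 (pr P X (X ω))) = -ent P X := by
  rw [mean_comp P X fun x ↦ logb 2 (pr P X x), ent, Finset.sum_neg_distrib, neg_neg, mean]

/-- Under `P`, the ratio `f / g` is positive and its logarithm has expectation `I`. -/
structure HasLogRatio (P f g : Ω → ℝ) (I : ℝ) : Prop where
  left_pos : ∀ ω, P ω ≠ 0 → 0 < f ω
  right_pos : ∀ ω, P ω ≠ 0 → 0 < g ω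
  mean_sub : mean P (fun ω ↦ logb 2 (f ω)) - mean P (fun ω ↦ logb 2 (g ω)) = I

lemma HasLogRatio.symm {f g : Ω → ℝ} {I : ℝ} (h : HasLogRatio P f g I) :
    HasLogRatio P g f (-I) where
  left_pos := h.right_pos
  right_pos := h.left_pos
  mean_sub := by rw [← h.mean_sub, neg_sub]

lemma HasLogRatio.comp {T : Ω → α} {f g : α → ℝ} {I : ℝ} (hP : ∀ ω, 0 ≤ P ω)
    (h : HasLogRatio (pr P T) f g I) : HasLogRatio P (fun ω ↦ f (T ω)) (fun ω ↦ g (T ω)) I where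
  left_pos ω hω := h.left_pos _ (pr_pos hP T hω).ne'
  right_pos ω hω := h.right_pos _ (pr_pos hP T hω).ne'
  mean_sub := by
    rw [← h.mean_sub, ← mean_comp P T fun a ↦ logb 2 (f a), ← mean_comp P T fun a ↦ logb 2 (g a)]

lemma HasLogRatio.pr_mul (hP : ∀ ω, 0 ≤ P ω) (X : Ω → α) {f g : Ω → ℝ} {I : ℝ}
    (h : HasLogRatio P f g I) :
    HasLogRatio P f (fun ω ↦ pr P X (X ω) * g ω) (ent P X + I) where
  left_pos := h.left_pos
  right_pos ω hω := mul_pos (pr_pos hP X hω) (h.right_pos ω hω)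
  mean_sub := by
    rw [mean_congr fun ω hω ↦ logb_mul (pr_pos hP X hω).ne' (h.right_pos ω hω).ne', mean_add,
      mean_logb_pr, ← h.mean_sub]
    ring

lemma hasLogRatio_neg_cmi (hP : ∀ ω, 0 ≤ P ω) {X : Ω → α} {Y : Ω → β} {Z : Ω → γ}
    {f g : Ω → ℝ} (hf : ∀ ω, P ω ≠ 0 → 0 < f ω) (hg : ∀ ω, P ω ≠ 0 → 0 < g ω)
    (h : ∀ ω, f ω * (pr P (fun ω ↦ (X ω, Y ω, Z ω)) (X ω, Y ω, Z ω) * pr P Z (Z ω)) =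
      g ω * (pr P (fun ω ↦ (X ω, Z ω)) (X ω, Z ω) * pr P (fun ω ↦ (Y ω, Z ω)) (Y ω, Z ω))) :
    HasLogRatio P f g (-cmi P X Y Z) := by
  have hlog : mean P (fun ω ↦ logb 2 (f ω) +
      (logb 2 (pr P (fun ω ↦ (X ω, Y ω, Z ω)) (X ω, Y ω, Z ω)) + logb 2 (pr P Z (Z ω)))) =
      mean P (fun ω ↦ logb 2 (g ω) + (logb 2 (pr P (fun ω ↦ (X ω, Z ω)) (X ω, Z ω)) +
        logb 2 (pr P (fun ω ↦ (Y ω, Z ω)) (Y ω, Z ω)))) := by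
    refine mean_congr fun ω hω ↦ ?_
    have hXYZ := (pr_pos hP (fun ω ↦ (X ω, Y ω, Z ω)) hω).ne'
    have hXZ := (pr_pos hP (fun ω ↦ (X ω, Z ω)) hω).ne'
    have hYZ := (pr_pos hP (fun ω ↦ (Y ω, Z ω)) hω).ne'
    have hZ := (pr_pos hP Z hω).ne'
    rw [← logb_mul hXYZ hZ, ← logb_mul (hf ω hω).ne' (mul_ne_zero hXYZ hZ), h ω,
      logb_mul (hg ω hω).ne' (mul_ne_zero hXZ hYZ), logb_mul hXZ hYZ]
  rw [mean_add, mean_add, mean_add, mean_add, mean_logb_pr P Z, mean_logb_pr P fun ω ↦ (X ω, Z ω),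
    mean_logb_pr P fun ω ↦ (Y ω, Z ω), mean_logb_pr P fun ω ↦ (X ω, Y ω, Z ω)] at hlog
  refine ⟨hf, hg, ?_⟩
  rw [cmi]
  linarith

lemma mean_logb_nonpos (hP : IsPMF P) {f : Ω → ℝ} (hf : ∀ ω, P ω ≠ 0 → 0 < f ω)
    (hf1 : mean P f ≤ 1) : mean P (fun ω ↦ logb 2 (f ω)) ≤ 0 := by
  have hlog2 : 0 < Real.log 2 := Real.log_pos one_lt_two
  calc mean P (fun ω ↦ logb 2 (f ω)) ≤ mean P fun ω ↦ (Real.log 2)⁻¹ * (f ω - 1) :=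
        mean_mono hP.1 fun ω hω ↦ by
          rw [logb, div_eq_inv_mul]
          exact mul_le_mul_of_nonneg_left (Real.log_le_sub_one_of_pos (hf ω hω))
            (inv_nonneg.2 hlog2.le)
    _ = (Real.log 2)⁻¹ * (mean P f - 1) := by rw [mean_const_mul, mean_sub, hP.mean_const]
    _ ≤ 0 := mul_nonpos_of_nonneg_of_nonpos (inv_nonneg.2 hlog2.le) (sub_nonpos.2 hf1)

lemma sum_pr (P : Ω → ℝ) (X : Ω → α) : ∑ x, pr P X x = ∑ ω, P ω := by
  simpa only [mean, mul_one] using (mean_comp P X fun _ ↦ 1).symm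

lemma cmi_nonneg (hP : IsPMF P) (X : Ω → α) (Y : Ω → β) (Z : Ω → γ) : 0 ≤ cmi P X Y Z := by
  set a : α × γ → ℝ := pr P fun ω ↦ (X ω, Z ω) with ha
  set b : β × γ → ℝ := pr P fun ω ↦ (Y ω, Z ω) with hb
  set c : γ → ℝ := pr P Z with hc
  set d : α × β × γ → ℝ := pr P fun ω ↦ (X ω, Y ω, Z ω)
  have hnum (ω : Ω) (hω : P ω ≠ 0) : 0 < a (X ω, Z ω) * b (Y ω, Z ω) :=
    mul_pos (pr_pos hP.1 (fun ω ↦ (X ω, Z ω)) hω) (pr_pos hP.1 (fun ω ↦ (Y ω, Z ω)) hω)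
  have hden (ω : Ω) (hω : P ω ≠ 0) : 0 < d (X ω, Y ω, Z ω) * c (Z ω) :=
    mul_pos (pr_pos hP.1 (fun ω ↦ (X ω, Y ω, Z ω)) hω) (pr_pos hP.1 Z hω)
  have hmean : mean P (fun ω ↦ a (X ω, Z ω) * b (Y ω, Z ω) / (d (X ω, Y ω, Z ω) * c (Z ω))) ≤ 1 :=
    calc _ = mean d fun v ↦ a (v.1, v.2.2) * b v.2 / (d v * c v.2.2) :=
          mean_comp P (fun ω ↦ (X ω, Y ω, Z ω)) fun v ↦ a (v.1, v.2.2) * b v.2 / (d v * c v.2.2)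
      _ ≤ ∑ v : α × β × γ, a (v.1, v.2.2) * b v.2 / c v.2.2 := by
          refine Finset.sum_le_sum fun v _ ↦ ?_
          dsimp only
          rcases eq_or_ne (d v) 0 with hv | hv
          · rw [hv, zero_mul]
            exact div_nonneg (mul_nonneg (pr_nonneg hP.1 _ _) (pr_nonneg hP.1 _ _))
              (pr_nonneg hP.1 _ _)
          · rw [mul_div_assoc', mul_div_mul_left _ _ hv]
      _ = ∑ z, c z * c z / c z := by
          simp only [Fintype.sum_prod_type]
          rw [Finset.sum_comm, Finset.sum_congr rfl fun y _ ↦ Finset.sum_comm, Finset.sum_comm]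
          refine Finset.sum_congr rfl fun z _ ↦ ?_
          simp only [← Finset.sum_div, ← Finset.sum_mul, ← Finset.mul_sum, ha, hb, hc, sum_pr_prod]
      _ = 1 := by simp only [mul_self_div_self, hc, sum_pr, hP.2]
  have hcmi := (hasLogRatio_neg_cmi hP.1 hnum hden fun ω ↦ mul_comm _ _).mean_sub
  rw [← mean_sub, mean_congr fun ω hω ↦ (logb_div (hnum ω hω).ne' (hden ω hω).ne').symm] at hcmi
  have hlog := mean_logb_nonpos hP (fun ω hω ↦ div_pos (hnum ω hω) (hden ω hω)) hmean
  rwa [hcmi, neg_nonpos] at hlog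

end Information

section LargeDeviation

variable {Ω : Type*} [Fintype Ω] {P : Ω → ℝ}

lemma mean_ind_add_le_sum_le (hP : IsPMF P) (h : Ω → ℝ) (n : ℕ) {δ : ℝ} (hδ : 0 < δ) :
    mean (prodLaw fun _ : Fin n ↦ P) (fun ω ↦ ind (n * mean P h + δ ≤ ∑ i, h (ω i))) ≤
      n * mean P (fun a ↦ h a ^ 2) / δ ^ 2 := by
  rw [le_div_iff₀ (pow_pos hδ 2), mul_comm, ← mean_const_mul]
  refine (mean_mono (isPMF_prodLaw fun _ ↦ hP).1 fun ω _ ↦ ?_).trans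
    (mean_prodLaw_sq_sum_sub_le hP h)
  by_cases hω : n * mean P h + δ ≤ ∑ i, h (ω i)
  · rw [ind_of_true hω, mul_one]
    exact pow_le_pow_left₀ hδ.le (le_sub_iff_add_le'.2 hω) 2
  · rw [ind_of_false hω, mul_zero]
    exact sq_nonneg _

lemma tendsto_mean_ind_add_le_sum (hP : IsPMF P) (h : Ω → ℝ) {t : ℝ} (ht : mean P h < t) (b : ℝ) :
    Tendsto (fun n : ℕ ↦ mean (prodLaw fun _ : Fin n ↦ P)
      fun ω ↦ ind (n * t + b ≤ ∑ i, h (ω i))) atTop (nhds 0) := by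
  set τ := (t - mean P h) / 2 with hτ
  have hτ0 : 0 < τ := half_pos (sub_pos.2 ht)
  have hbound : Tendsto (fun n : ℕ ↦ mean P (fun a ↦ h a ^ 2) / τ ^ 2 / n) atTop (nhds 0) :=
    tendsto_const_div_atTop_nhds_zero_nat _
  refine squeeze_zero' (Eventually.of_forall fun n ↦
    mean_nonneg (isPMF_prodLaw fun _ ↦ hP).1 fun _ ↦ ind_nonneg _) ?_ hbound
  have hlarge : ∀ᶠ n : ℕ in atTop, -b ≤ n * τ :=
    (tendsto_natCast_atTop_atTop.atTop_mul_const hτ0).eventually_ge_atTop _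
  filter_upwards [hlarge, eventually_gt_atTop 0] with n hn hn0
  have hn0' : (0 : ℝ) < n := Nat.cast_pos.2 hn0
  calc _ ≤ mean (prodLaw fun _ : Fin n ↦ P)
        (fun ω ↦ ind (n * mean P h + n * τ ≤ ∑ i, h (ω i))) := by
        refine mean_mono (isPMF_prodLaw fun _ ↦ hP).1 fun ω _ ↦ ind_mono fun hω ↦ ?_
        have : n * t = n * mean P h + n * τ + n * τ := by rw [hτ]; ring
        linarith
    _ ≤ n * mean P (fun a ↦ h a ^ 2) / (n * τ) ^ 2 :=
        mean_ind_add_le_sum_le hP h n (mul_pos hn0' hτ0)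
    _ = mean P (fun a ↦ h a ^ 2) / τ ^ 2 / n := by field_simp

lemma tendsto_mean_ind_prod_lt (hP : IsPMF P) {f g : Ω → ℝ} {I t : ℝ}
    (hfg : HasLogRatio P f g I) (ht : I < t) {c : ℝ} (hc : 0 < c) :
    Tendsto (fun n : ℕ ↦ mean (prodLaw fun _ : Fin n ↦ P)
      fun ω ↦ ind (c * ((2 : ℝ) ^ t) ^ n * ∏ i, g (ω i) < ∏ i, f (ω i))) atTop (nhds 0) := by
  rw [← hfg.mean_sub, ← mean_sub] at ht
  refine squeeze_zero (fun n ↦ mean_nonneg (isPMF_prodLaw fun _ ↦ hP).1 fun _ ↦ ind_nonneg _)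
    (fun n ↦ ?_) (tendsto_mean_ind_add_le_sum hP _ ht (logb 2 c))
  refine mean_mono (isPMF_prodLaw fun _ ↦ hP).1 fun ω hω ↦ ind_mono fun hlt ↦ ?_
  have hsupp (i : Fin n) : P (ω i) ≠ 0 := Finset.prod_ne_zero_iff.1 hω i (Finset.mem_univ i)
  have hgpos : 0 < ∏ i, g (ω i) := Finset.prod_pos fun i _ ↦ hfg.right_pos _ (hsupp i)
  have htpos : 0 < ((2 : ℝ) ^ t) ^ n := pow_pos (rpow_pos_of_pos two_pos t) n
  have hlog := logb_le_logb_of_le one_lt_two (mul_pos (mul_pos hc htpos) hgpos) hlt.le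
  rw [logb_mul (mul_pos hc htpos).ne' hgpos.ne', logb_mul hc.ne' htpos.ne', logb_pow,
    logb_rpow two_pos one_lt_two.ne', logb_prod _ _ fun i _ ↦ (hfg.left_pos _ (hsupp i)).ne',
    logb_prod _ _ fun i _ ↦ (hfg.right_pos _ (hsupp i)).ne'] at hlog
  rw [Finset.sum_sub_distrib]
  linarith

end LargeDeviation

section Words

variable {Q U U' W X Z X' A : Type*} {n : ℕ}

/-- The memoryless extension of the test channels `k` along the time-sharing word `q`. -/
def wordKernel (k : Q → U → W × X → ℝ) (q : Fin n → Q) (u : Fin n → U)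
    (a : (Fin n → W) × (Fin n → X)) : ℝ :=
  ∏ i, k (q i) (u i) (a.1 i, a.2 i)

/-- The memoryless extension of an observation law. -/
def wordObs (Γ : U' → X → X' → A → ℝ) (u' : Fin n → U') (x : Fin n → X) (x' : Fin n → X')
    (y : Fin n → A) : ℝ :=
  ∏ i, Γ (u' i) (x i) (x' i) (y i)

lemma sum_arrow_prod {ι α β : Type*} [Fintype ι] [DecidableEq ι] [Fintype α] [Fintype β]
    (F : (ι → α × β) → ℝ) : ∑ ω, F ω = ∑ a : ι → α, ∑ b : ι → β, F fun i ↦ (a i, b i) := by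
  rw [← Fintype.sum_prod_type']
  exact Fintype.sum_equiv (Equiv.arrowProdEquivProdArrow ι (fun _ ↦ α) fun _ ↦ β) _ _ fun _ ↦ rfl

lemma isKernel_wordKernel [Fintype W] [Fintype X] {k : Q → U → W × X → ℝ}
    (hk : ∀ q, IsKernel (k q)) (q : Fin n → Q) : IsKernel (wordKernel k q) := by
  refine fun u ↦ ⟨fun a ↦ Finset.prod_nonneg fun i _ ↦ (hk _ _).1 _, ?_⟩
  have h := (isPMF_prodLaw fun i : Fin n ↦ hk (q i) (u i)).2
  rwa [sum_arrow_prod, ← Fintype.sum_prod_type'] at h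

lemma isObservation_wordObs [Fintype A] {p' : U' → ℝ} {Γ : U' → X → X' → A → ℝ}
    (hΓ : IsObservation p' Γ) :
    IsObservation (prodLaw fun _ : Fin n ↦ p') (wordObs Γ) where
  nonneg _ _ _ _ := Finset.prod_nonneg fun _ _ ↦ hΓ.nonneg _ _ _ _
  sum_eq u' x x' := by
    rw [prodLaw, Finset.prod_congr rfl fun i _ ↦ (hΓ.sum_eq (u' i) (x i) (x' i)).symm]
    exact (Fintype.prod_sum fun i y ↦ Γ (u' i) (x i) (x' i) y).symm

lemma inputLaw_wordKernel [Fintype U] (p : U → ℝ) (k : Q → U → W × X → ℝ) (q : Fin n → Q)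
    (a : (Fin n → W) × (Fin n → X)) :
    inputLaw (prodLaw fun _ ↦ p) (wordKernel k q) a =
      ∏ i, inputLaw p (k (q i)) (a.1 i, a.2 i) :=
  mean_prodLaw_prod (fun _ ↦ p) fun i u ↦ k (q i) u (a.1 i, a.2 i)

lemma outputLaw_wordKernel [Fintype U'] [Fintype X'] (k' : Q → U' → Z × X' → ℝ)
    (Γ : U' → X → X' → A → ℝ) (q : Fin n → Q) (x : Fin n → X) (z : Fin n → Z) (y : Fin n → A) :
    outputLaw (wordKernel k' q) (wordObs Γ) x z y =
      ∏ i, outputLaw (k' (q i)) Γ (x i) (z i) (y i) := by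
  simp only [outputLaw, wordKernel, wordObs, ← Finset.prod_mul_distrib]
  rw [← sum_arrow_prod fun ω : Fin n → U' × X' ↦
    ∏ i, k' (q i) (ω i).1 (z i, (ω i).2) * Γ (ω i).1 (x i) (ω i).2 (y i)]
  simp only [← Fintype.sum_prod_type']
  exact (Fintype.prod_sum fun i (b : U' × X') ↦
    k' (q i) b.1 (z i, b.2) * Γ b.1 (x i) b.2 (y i)).symm

variable [Fintype X]

lemma fstLaw_prod (κ : Fin n → W × X → ℝ) (w : Fin n → W) :
    fstLaw (fun a : (Fin n → W) × (Fin n → X) ↦ ∏ i, κ i (a.1 i, a.2 i)) w =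
      ∏ i, fstLaw (κ i) (w i) :=
  (Fintype.prod_sum fun i x ↦ κ i (w i, x)).symm

lemma centreLaw_prod (κ : Fin n → W × X → ℝ) (G : Fin n → X → Z → A → ℝ) (w : Fin n → W)
    (z : Fin n → Z) (y : Fin n → A) :
    centreLaw (fun a : (Fin n → W) × (Fin n → X) ↦ ∏ i, κ i (a.1 i, a.2 i))
      (fun x z y ↦ ∏ i, G i (x i) (z i) (y i)) w z y =
      ∏ i, centreLaw (κ i) (G i) (w i) (z i) (y i) := by
  simp only [centreLaw, ← Finset.prod_mul_distrib]
  exact (Fintype.prod_sum fun i x ↦ κ i (w i, x) * G i x (z i) (y i)).symm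

end Words

section SingleLetter

variable {Q U U' W X Z X' A : Type*} {n : ℕ}

/-- The joint law of time-sharing letter, source letter, cloud centre and channel input. -/
def sourceLaw (pQ : Q → ℝ) (p : U → ℝ) (k : Q → U → W × X → ℝ) : Q × U × W × X → ℝ :=
  fun (q, u, w, x) ↦ pQ q * (p u * k q u (w, x))

/-- The extension of `sourceLaw` by the interferer's cloud centre and the receiver's output. -/
def receiverLaw (pQ : Q → ℝ) (p : U → ℝ) (k : Q → U → W × X → ℝ) (G : Q → X → Z → A → ℝ) :
    (Q × U × W × X) × (Z × A) → ℝ :=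
  fun ((q, u, w, x), (z, y)) ↦ sourceLaw pQ p k (q, u, w, x) * G q x z y

variable [Fintype Q] [Fintype U] [Fintype W] [Fintype X] [Fintype Z] [Fintype A]
  {pQ : Q → ℝ} {p : U → ℝ} {k : Q → U → W × X → ℝ} {G : Q → X → Z → A → ℝ}

lemma mean_sourceLaw (F : Q × U × W × X → ℝ) : mean (sourceLaw pQ p k) F =
    mean pQ fun q ↦ mean p fun u ↦ mean (k q u) fun a ↦ F (q, u, a) := by
  simp only [mean, sourceLaw, Fintype.sum_prod_type, Finset.mul_sum, mul_assoc]

lemma mean_receiverLaw (F : (Q × U × W × X) × (Z × A) → ℝ) : mean (receiverLaw pQ p k G) F =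
    mean (sourceLaw pQ p k) fun s ↦ ∑ z, ∑ y, G s.1 s.2.2.2 z y * F (s, z, y) := by
  simp only [mean, receiverLaw, Fintype.sum_prod_type, Finset.mul_sum, mul_assoc]

lemma isPMF_sourceLaw (hpQ : IsPMF pQ) (hp : IsPMF p) (hk : ∀ q, IsKernel (k q)) :
    IsPMF (sourceLaw pQ p k) := by
  refine ⟨fun ⟨q, u, w, x⟩ ↦ mul_nonneg (hpQ.1 q) (mul_nonneg (hp.1 u) ((hk q u).1 _)), ?_⟩
  have h := mean_sourceLaw (pQ := pQ) (p := p) (k := k) fun _ ↦ 1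
  simp only [(hk _ _).mean_const, hp.mean_const, hpQ.mean_const] at h
  simpa only [mean, mul_one] using h

lemma isPMF_receiverLaw (hs : IsPMF (sourceLaw pQ p k)) (hG : ∀ q x z y, 0 ≤ G q x z y)
    (hG1 : ∀ q x, ∑ z, ∑ y, G q x z y = 1) : IsPMF (receiverLaw pQ p k G) := by
  refine ⟨fun ⟨s, z, y⟩ ↦ mul_nonneg (hs.1 s) (hG _ _ _ _), ?_⟩
  have h := mean_receiverLaw (pQ := pQ) (p := p) (k := k) (G := G) fun _ ↦ 1
  simp only [mul_one, hG1, hs.mean_const] at h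
  simpa only [mean, mul_one] using h

lemma mean_prodLaw_sourceLaw (F : (Fin n → Q × U × W × X) → ℝ) :
    mean (prodLaw fun _ ↦ sourceLaw pQ p k) F =
      mean (prodLaw fun _ ↦ pQ) fun q ↦ mean (prodLaw fun _ ↦ p) fun u ↦
        mean (wordKernel k q u) fun a ↦ F fun i ↦ (q i, u i, a.1 i, a.2 i) := by
  simp only [mean, sum_arrow_prod, Fintype.sum_prod_type, prodLaw, wordKernel, sourceLaw,
    Finset.prod_mul_distrib, Finset.mul_sum, mul_assoc]

lemma mean_prodLaw_receiverLaw (F : (Fin n → (Q × U × W × X) × (Z × A)) → ℝ) :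
    mean (prodLaw fun _ ↦ receiverLaw pQ p k G) F =
      mean (prodLaw fun _ ↦ pQ) fun q ↦ mean (prodLaw fun _ ↦ p) fun u ↦
        mean (wordKernel k q u) fun a ↦ ∑ z : Fin n → Z, ∑ y : Fin n → A,
          (∏ i, G (q i) (a.2 i) (z i) (y i)) *
            F fun i ↦ ((q i, u i, a.1 i, a.2 i), (z i, y i)) := by
  simp only [mean, sum_arrow_prod, Fintype.sum_prod_type, prodLaw, wordKernel, sourceLaw,
    receiverLaw, Finset.prod_mul_distrib, Finset.mul_sum, mul_assoc]

end SingleLetter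

section LinkLaw

variable {Q W X Z A : Type*}

/-- The joint law of time-sharing letter, cloud centre, channel input, interfering cloud centre and
receiver's output, when `κ q` is the law of the transmitter's pair and `G q` that of the output. -/
def linkLaw (pQ : Q → ℝ) (κ : Q → W × X → ℝ) (G : Q → X → Z → A → ℝ) : Q × W × X × Z × A → ℝ :=
  fun (q, w, x, z, y) ↦ pQ q * (κ q (w, x) * G q x z y)

variable {pQ : Q → ℝ} {κ : Q → W × X → ℝ} {G : Q → X → Z → A → ℝ} {r' : Q → Z → ℝ}

lemma linkLaw_nonneg (hpQ : ∀ q, 0 ≤ pQ q) (hκ : ∀ q a, 0 ≤ κ q a) (hG : ∀ q x z y, 0 ≤ G q x z y)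
    (s : Q × W × X × Z × A) : 0 ≤ linkLaw pQ κ G s :=
  mul_nonneg (hpQ _) (mul_nonneg (hκ _ _) (hG _ _ _ _))

lemma right_pos_of_linkLaw_ne_zero (hG : ∀ q x z y, 0 ≤ G q x z y) {s : Q × W × X × Z × A}
    (hs : linkLaw pQ κ G s ≠ 0) : 0 < G s.1 s.2.2.1 s.2.2.2.1 s.2.2.2.2 :=
  (hG _ _ _ _).lt_of_ne' (right_ne_zero_of_mul (right_ne_zero_of_mul hs))

lemma interferer_pos_of_linkLaw_ne_zero [Fintype A] (hG : ∀ q x z y, 0 ≤ G q x z y)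
    (hGr' : ∀ q x z, ∑ y, G q x z y = r' q z) {s : Q × W × X × Z × A}
    (hs : linkLaw pQ κ G s ≠ 0) : 0 < r' s.1 s.2.2.2.1 := by
  rw [← hGr' s.1 s.2.2.1]
  exact Finset.sum_pos' (fun _ _ ↦ hG _ _ _ _)
    ⟨_, Finset.mem_univ _, right_pos_of_linkLaw_ne_zero hG hs⟩

variable [Fintype X]

lemma sum_centreLaw [Fintype Z] (κ : W × X → ℝ) (G : X → Z → A → ℝ) (w : W) (y : A) :
    ∑ z, centreLaw κ G w z y = ∑ x, κ (w, x) * ∑ z, G x z y := by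
  simp only [centreLaw, Finset.mul_sum]
  exact Finset.sum_comm

lemma fstLaw_pos_of_linkLaw_ne_zero (hκ : ∀ q a, 0 ≤ κ q a) {s : Q × W × X × Z × A}
    (hs : linkLaw pQ κ G s ≠ 0) : 0 < fstLaw (κ s.1) s.2.1 :=
  Finset.sum_pos' (fun _ _ ↦ hκ _ _) ⟨s.2.2.1, Finset.mem_univ _,
    (hκ _ _).lt_of_ne' (left_ne_zero_of_mul (right_ne_zero_of_mul hs))⟩

lemma centreLaw_nonneg {κ : W × X → ℝ} {G : X → Z → A → ℝ} (hκ : ∀ a, 0 ≤ κ a)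
    (hG : ∀ x z y, 0 ≤ G x z y) (w : W) (z : Z) (y : A) : 0 ≤ centreLaw κ G w z y :=
  Finset.sum_nonneg fun _ _ ↦ mul_nonneg (hκ _) (hG _ _ _)

lemma centreLaw_pos_of_linkLaw_ne_zero (hκ : ∀ q a, 0 ≤ κ q a) (hG : ∀ q x z y, 0 ≤ G q x z y)
    {s : Q × W × X × Z × A} (hs : linkLaw pQ κ G s ≠ 0) :
    0 < centreLaw (κ s.1) (G s.1) s.2.1 s.2.2.2.1 s.2.2.2.2 :=
  Finset.sum_pos' (fun _ _ ↦ mul_nonneg (hκ _ _) (hG _ _ _ _)) ⟨s.2.2.1, Finset.mem_univ _,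
    (mul_nonneg (hκ _ _) (hG _ _ _ _)).lt_of_ne' (right_ne_zero_of_mul hs)⟩

variable [Fintype Q] [Fintype W] [Fintype Z] [Fintype A]

lemma hasLogRatio_centreLaw (hpQ : ∀ q, 0 ≤ pQ q) (hκ : IsKernel κ)
    (hG : ∀ q x z y, 0 ≤ G q x z y) (hGr' : ∀ q x z, ∑ y, G q x z y = r' q z) :
    HasLogRatio (linkLaw pQ κ G)
      (fun s ↦ centreLaw (κ s.1) (G s.1) s.2.1 s.2.2.2.1 s.2.2.2.2)
      (fun s ↦ fstLaw (κ s.1) s.2.1 * G s.1 s.2.2.1 s.2.2.2.1 s.2.2.2.2)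
      (-cmi (linkLaw pQ κ G) (fun s ↦ s.2.2.1) (fun s ↦ s.2.2.2.2)
        (fun s ↦ (s.2.1, s.2.2.2.1, s.1))) := by
  have hκ0 (q : Q) := (hκ q).1
  refine hasLogRatio_neg_cmi (linkLaw_nonneg hpQ hκ0 hG)
    (fun s hs ↦ centreLaw_pos_of_linkLaw_ne_zero hκ0 hG hs)
    (fun s hs ↦ mul_pos (fstLaw_pos_of_linkLaw_ne_zero hκ0 hs)
      (right_pos_of_linkLaw_ne_zero hG hs)) fun ⟨q, w, x, z, y⟩ ↦ ?_
  simp only [pr, Fintype.sum_prod_type, Prod.mk.injEq, ite_and, Finset.sum_ite_irrel,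
    Finset.sum_const_zero, Finset.sum_ite_eq', Finset.mem_univ, if_true, linkLaw,
    ← Finset.mul_sum, hGr', centreLaw, ← Finset.sum_mul, fstLaw]
  ring

lemma hasLogRatio_sum_centreLaw (hpQ : ∀ q, 0 ≤ pQ q) (hκ : IsKernel κ)
    (hG : ∀ q x z y, 0 ≤ G q x z y) (hGr' : ∀ q x z, ∑ y, G q x z y = r' q z) :
    HasLogRatio (linkLaw pQ κ G)
      (fun s ↦ ∑ w, centreLaw (κ s.1) (G s.1) w s.2.2.2.1 s.2.2.2.2)
      (fun s ↦ G s.1 s.2.2.1 s.2.2.2.1 s.2.2.2.2)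
      (-cmi (linkLaw pQ κ G) (fun s ↦ s.2.2.1) (fun s ↦ s.2.2.2.2)
        (fun s ↦ (s.2.2.2.1, s.1))) := by
  have hκ0 (q : Q) := (hκ q).1
  have hκ1 (q : Q) : ∑ w, ∑ x, κ q (w, x) = 1 := by rw [← Fintype.sum_prod_type', (hκ q).2]
  refine hasLogRatio_neg_cmi (linkLaw_nonneg hpQ hκ0 hG)
    (fun s hs ↦ Finset.sum_pos' (fun _ _ ↦ centreLaw_nonneg (hκ0 _) (hG _) _ _ _)
      ⟨s.2.1, Finset.mem_univ _, centreLaw_pos_of_linkLaw_ne_zero hκ0 hG hs⟩)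
    (fun s hs ↦ right_pos_of_linkLaw_ne_zero hG hs) fun ⟨q, w, x, z, y⟩ ↦ ?_
  simp only [pr, Fintype.sum_prod_type, Prod.mk.injEq, ite_and, Finset.sum_ite_irrel,
    Finset.sum_const_zero, Finset.sum_ite_eq', Finset.mem_univ, if_true, linkLaw,
    ← Finset.mul_sum, hGr', centreLaw, ← Finset.sum_mul, hκ1]
  ring

lemma hasLogRatio_mul_sum_centreLaw (hpQ : ∀ q, 0 ≤ pQ q) (hκ : IsKernel κ)
    (hG : ∀ q x z y, 0 ≤ G q x z y) (hr' : IsKernel r')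
    (hGr' : ∀ q x z, ∑ y, G q x z y = r' q z) :
    HasLogRatio (linkLaw pQ κ G)
      (fun s ↦ r' s.1 s.2.2.2.1 * ∑ z, centreLaw (κ s.1) (G s.1) s.2.1 z s.2.2.2.2)
      (fun s ↦ fstLaw (κ s.1) s.2.1 * G s.1 s.2.2.1 s.2.2.2.1 s.2.2.2.2)
      (-cmi (linkLaw pQ κ G) (fun s ↦ (s.2.2.2.1, s.2.2.1)) (fun s ↦ s.2.2.2.2)
        (fun s ↦ (s.2.1, s.1))) := by
  have hκ0 (q : Q) := (hκ q).1
  have hr'1 (q : Q) : ∑ z, r' q z = 1 := (hr' q).2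
  refine hasLogRatio_neg_cmi (linkLaw_nonneg hpQ hκ0 hG)
    (fun s hs ↦ mul_pos (interferer_pos_of_linkLaw_ne_zero hG hGr' hs) <| Finset.sum_pos'
      (fun _ _ ↦ centreLaw_nonneg (hκ0 _) (hG _) _ _ _)
      ⟨_, Finset.mem_univ _, centreLaw_pos_of_linkLaw_ne_zero hκ0 hG hs⟩)
    (fun s hs ↦ mul_pos (fstLaw_pos_of_linkLaw_ne_zero hκ0 hs)
      (right_pos_of_linkLaw_ne_zero hG hs)) fun ⟨q, w, x, z, y⟩ ↦ ?_
  simp only [pr, Fintype.sum_prod_type, Prod.mk.injEq, ite_and, Finset.sum_ite_irrel,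
    Finset.sum_const_zero, Finset.sum_ite_eq', Finset.mem_univ, if_true, linkLaw,
    ← Finset.mul_sum, hGr', sum_centreLaw, ← Finset.sum_mul, fstLaw, hr'1]
  ring

lemma hasLogRatio_mul_sum_sum_centreLaw (hpQ : ∀ q, 0 ≤ pQ q) (hκ : IsKernel κ)
    (hG : ∀ q x z y, 0 ≤ G q x z y) (hr' : IsKernel r')
    (hGr' : ∀ q x z, ∑ y, G q x z y = r' q z) :
    HasLogRatio (linkLaw pQ κ G)
      (fun s ↦ r' s.1 s.2.2.2.1 * ∑ w, ∑ z, centreLaw (κ s.1) (G s.1) w z s.2.2.2.2)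
      (fun s ↦ G s.1 s.2.2.1 s.2.2.2.1 s.2.2.2.2)
      (-cmi (linkLaw pQ κ G) (fun s ↦ (s.2.2.2.1, s.2.2.1)) (fun s ↦ s.2.2.2.2)
        (fun s ↦ s.1)) := by
  have hκ0 (q : Q) := (hκ q).1
  have hκ1 (q : Q) : ∑ w, ∑ x, κ q (w, x) = 1 := by rw [← Fintype.sum_prod_type', (hκ q).2]
  have hr'1 (q : Q) : ∑ z, r' q z = 1 := (hr' q).2
  have hcentre (q : Q) (w : W) (z : Z) (y : A) : 0 ≤ centreLaw (κ q) (G q) w z y :=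
    centreLaw_nonneg (hκ0 q) (hG q) w z y
  refine hasLogRatio_neg_cmi (linkLaw_nonneg hpQ hκ0 hG)
    (fun s hs ↦ mul_pos (interferer_pos_of_linkLaw_ne_zero hG hGr' hs) <| Finset.sum_pos'
      (fun _ _ ↦ Finset.sum_nonneg fun _ _ ↦ hcentre _ _ _ _) ⟨_, Finset.mem_univ _,
        Finset.sum_pos' (fun _ _ ↦ hcentre _ _ _ _)
          ⟨_, Finset.mem_univ _, centreLaw_pos_of_linkLaw_ne_zero hκ0 hG hs⟩⟩)
    (fun s hs ↦ right_pos_of_linkLaw_ne_zero hG hs) fun ⟨q, w, x, z, y⟩ ↦ ?_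
  simp only [pr, Fintype.sum_prod_type, Prod.mk.injEq, ite_and, Finset.sum_ite_irrel,
    Finset.sum_const_zero, Finset.sum_ite_eq', Finset.mem_univ, if_true, linkLaw,
    ← Finset.mul_sum, hGr', sum_centreLaw, ← Finset.sum_mul, hκ1, hr'1]
  ring

end LinkLaw

section ReceiverRatios

variable {Q U W X Z A : Type*} [Fintype U] [Fintype X]

lemma fstLaw_inputLaw (p : U → ℝ) (k : U → W × X → ℝ) (w : W) :
    fstLaw (inputLaw p k) w = mean p fun u ↦ fstLaw (k u) w := by
  simp only [fstLaw, inputLaw, mean, Finset.mul_sum]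
  exact Finset.sum_comm

variable [Fintype Q] [Fintype W] [Fintype Z] [Fintype A]
  {pQ : Q → ℝ} {p : U → ℝ} {k : Q → U → W × X → ℝ} {G : Q → X → Z → A → ℝ}

lemma fstLaw_eq_zero_of_inputLaw (hp : ∀ u, 0 ≤ p u) {k : U → W × X → ℝ} (hk : IsKernel k) {u : U}
    (hu : p u ≠ 0) {w : W} (hw : fstLaw (inputLaw p k) w = 0) : fstLaw (k u) w = 0 := by
  rw [fstLaw_inputLaw, mean, Finset.sum_eq_zero_iff_of_nonneg fun u _ ↦
    mul_nonneg (hp u) (fstLaw_nonneg (hk u).1 w)] at hw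
  exact (mul_eq_zero.1 (hw u (Finset.mem_univ u))).resolve_left hu

lemma hasLogRatio_fstLaw (hpQ : IsPMF pQ) (hp : IsPMF p) (hk : ∀ q, IsKernel (k q)) :
    HasLogRatio (sourceLaw pQ p k) (fun s ↦ fstLaw (k s.1 s.2.1) s.2.2.1)
      (fun s ↦ fstLaw (inputLaw p (k s.1)) s.2.2.1)
      (cmi (sourceLaw pQ p k) (fun s ↦ s.2.1) (fun s ↦ s.2.2.1) (fun s ↦ s.1)) := by
  have hkpos (s : Q × U × W × X) (hs : sourceLaw pQ p k s ≠ 0) :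
      0 < fstLaw (k s.1 s.2.1) s.2.2.1 :=
    Finset.sum_pos' (fun _ _ ↦ (hk _ _).1 _) ⟨s.2.2.2, Finset.mem_univ _,
      ((hk _ _).1 _).lt_of_ne' (right_ne_zero_of_mul (right_ne_zero_of_mul hs))⟩
  have hrpos (s : Q × U × W × X) (hs : sourceLaw pQ p k s ≠ 0) :
      0 < fstLaw (inputLaw p (k s.1)) s.2.2.1 := by
    refine (fstLaw_nonneg (isPMF_inputLaw hp (hk _)).1 _).lt_of_ne' fun h0 ↦ (hkpos s hs).ne' ?_
    exact fstLaw_eq_zero_of_inputLaw hp.1 (hk _)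
      (left_ne_zero_of_mul (right_ne_zero_of_mul hs)) h0
  have hk1 (q : Q) (u : U) : ∑ w, ∑ x, k q u (w, x) = 1 := by
    rw [← Fintype.sum_prod_type', (hk q u).2]
  rw [← neg_neg (cmi _ _ _ _)]
  refine (hasLogRatio_neg_cmi (isPMF_sourceLaw hpQ hp hk).1 hrpos hkpos
    fun ⟨q, u, w, x⟩ ↦ ?_).symm
  simp only [fstLaw_inputLaw, mean]
  simp only [pr, Fintype.sum_prod_type, Prod.mk.injEq, ite_and, Finset.sum_ite_irrel,
    Finset.sum_const_zero, Finset.sum_ite_eq', Finset.mem_univ, if_true, sourceLaw,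
    ← Finset.mul_sum, hk1, mul_one, hp.2, fstLaw]
  ring

lemma pr_receiverLaw_fst (pQ : Q → ℝ) (p : U → ℝ) (k : Q → U → W × X → ℝ)
    (hG1 : ∀ q x, ∑ z, ∑ y, G q x z y = 1) :
    pr (receiverLaw pQ p k G) Prod.fst = sourceLaw pQ p k := by
  funext s
  have h := mean_comp (receiverLaw pQ p k G) Prod.fst fun t ↦ ind (t = s)
  rw [mean_receiverLaw] at h
  simp only [← Finset.sum_mul, hG1, one_mul] at h
  simpa only [mean, ind, mul_ite, mul_one, mul_zero, Finset.sum_ite_eq', Finset.mem_univ, if_true]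
    using h.symm

lemma pr_receiverLaw_source (hpQ : IsPMF pQ) (hk : ∀ q, IsKernel (k q))
    (hG1 : ∀ q x, ∑ z, ∑ y, G q x z y = 1) :
    pr (receiverLaw pQ p k G) (fun s ↦ s.1.2.1) = p := by
  funext u
  have h := mean_comp (receiverLaw pQ p k G) (fun s ↦ s.1.2.1) fun v ↦ ind (v = u)
  rw [mean_receiverLaw, mean_sourceLaw] at h
  simp only [← Finset.sum_mul, hG1, one_mul, (hk _ _).mean_const, hpQ.mean_const] at h
  simpa only [mean, ind, mul_ite, mul_one, mul_zero, Finset.sum_ite_eq', Finset.mem_univ, if_true]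
    using h.symm

lemma pr_receiverLaw_link (pQ : Q → ℝ) (p : U → ℝ) (k : Q → U → W × X → ℝ)
    (G : Q → X → Z → A → ℝ) :
    pr (receiverLaw pQ p k G) (fun s ↦ (s.1.1, s.1.2.2.1, s.1.2.2.2, s.2.1, s.2.2)) =
      linkLaw pQ (fun q ↦ inputLaw p (k q)) G := by
  funext ⟨q, w, x, z, y⟩
  simp only [pr, Fintype.sum_prod_type, Prod.mk.injEq, ite_and, Finset.sum_ite_irrel,
    Finset.sum_const_zero, Finset.sum_ite_eq', Finset.mem_univ, if_true, receiverLaw, sourceLaw,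
    linkLaw, inputLaw, mean, Finset.mul_sum, Finset.sum_mul, mul_assoc]

lemma hasLogRatio_receiverLaw (hpQ : IsPMF pQ) (hp : IsPMF p) (hk : ∀ q, IsKernel (k q))
    (hG : ∀ q x z y, 0 ≤ G q x z y) (hG1 : ∀ q x, ∑ z, ∑ y, G q x z y = 1)
    {f g : Q × W × X × Z × A → ℝ} {I : ℝ}
    (h : HasLogRatio (linkLaw pQ (fun q ↦ inputLaw p (k q)) G) f g I) :
    HasLogRatio (receiverLaw pQ p k G)
      (fun s ↦ f (s.1.1, s.1.2.2.1, s.1.2.2.2, s.2.1, s.2.2))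
      (fun s ↦ p s.1.2.1 * g (s.1.1, s.1.2.2.1, s.1.2.2.2, s.2.1, s.2.2))
      (ent (receiverLaw pQ p k G) (fun s ↦ s.1.2.1) + I) := by
  have hP := (isPMF_receiverLaw (isPMF_sourceLaw hpQ hp hk) hG hG1).1
  rw [← pr_receiverLaw_link] at h
  have h' := (h.comp hP).pr_mul hP fun s ↦ s.1.2.1
  rwa [pr_receiverLaw_source hpQ hk hG1] at h'

end ReceiverRatios

section Rates

lemma tendsto_mean_ind_mul_prod_lt {Ω : Type*} [Fintype Ω] {P : Ω → ℝ} (hP : IsPMF P)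
    {f g : Ω → ℝ} {I R R' : ℝ} (hfg : HasLogRatio P f g I) (hI : I < R - R') {N N' : ℕ → ℝ}
    (hN : ∀ n, ((2 : ℝ) ^ R) ^ n ≤ N n) (hN' : ∀ n, N' n ≤ 2 * ((2 : ℝ) ^ R') ^ n) {c : ℝ}
    (hc : 0 < c) :
    Tendsto (fun n : ℕ ↦ mean (prodLaw fun _ : Fin n ↦ P) fun ω ↦
      ind (c * N n * ∏ i, g (ω i) < N' n * ∏ i, f (ω i))) atTop (nhds 0) := by
  refine squeeze_zero (fun n ↦ mean_nonneg (isPMF_prodLaw fun _ ↦ hP).1 fun _ ↦ ind_nonneg _)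
    (fun n ↦ ?_) (tendsto_mean_ind_prod_lt hP hfg hI (half_pos hc))
  refine mean_mono (isPMF_prodLaw fun _ ↦ hP).1 fun ω hω ↦ ind_mono fun hlt ↦ ?_
  have hsupp (i : Fin n) : P (ω i) ≠ 0 := Finset.prod_ne_zero_iff.1 hω i (Finset.mem_univ i)
  have hf : 0 ≤ ∏ i, f (ω i) := Finset.prod_nonneg fun i _ ↦ (hfg.left_pos _ (hsupp i)).le
  have hg : 0 ≤ ∏ i, g (ω i) := Finset.prod_nonneg fun i _ ↦ (hfg.right_pos _ (hsupp i)).le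
  have hpos : 0 < ((2 : ℝ) ^ R') ^ n := pow_pos (rpow_pos_of_pos two_pos R') n
  rw [rpow_sub two_pos, div_pow, ← mul_lt_mul_iff_right₀ (mul_pos two_pos hpos)]
  calc 2 * ((2 : ℝ) ^ R') ^ n * (c / 2 * (((2 : ℝ) ^ R) ^ n / ((2 : ℝ) ^ R') ^ n) * ∏ i, g (ω i))
      = c * ((2 : ℝ) ^ R) ^ n * ∏ i, g (ω i) := by field_simp
    _ ≤ c * N n * ∏ i, g (ω i) :=
        mul_le_mul_of_nonneg_right (mul_le_mul_of_nonneg_left (hN n) hc.le) hg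
    _ < N' n * ∏ i, f (ω i) := hlt
    _ ≤ 2 * ((2 : ℝ) ^ R') ^ n * ∏ i, f (ω i) := mul_le_mul_of_nonneg_right (hN' n) hf

/-- The number of cloud centres in a codebook of rate `R` and length `n`. -/
noncomputable def bookSize (R : ℝ) (n : ℕ) : ℕ := ⌈((2 : ℝ) ^ R) ^ n⌉₊

lemma bookSize_pos (R : ℝ) (n : ℕ) : 0 < bookSize R n :=
  Nat.ceil_pos.2 (pow_pos (rpow_pos_of_pos two_pos R) n)

lemma le_bookSize (R : ℝ) (n : ℕ) : ((2 : ℝ) ^ R) ^ n ≤ bookSize R n := Nat.le_ceil _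

lemma bookSize_le {R : ℝ} (hR : 0 ≤ R) (n : ℕ) : (bookSize R n : ℝ) ≤ 2 * ((2 : ℝ) ^ R) ^ n := by
  have h1 : 1 ≤ ((2 : ℝ) ^ R) ^ n := one_le_pow₀ (one_le_rpow one_le_two hR)
  have h2 := Nat.ceil_lt_add_one (zero_le_one.trans h1)
  rw [bookSize]
  linarith

end Rates

section Decoding

/-- The condition under which a receiver with observation `A` decodes the source `U`, sent with
cloud centre `W` and channel input `X` over a codebook of rate `R`, jointly with the cloud centre
`Z` of the interferer's codebook of rate `R'`. There is one inequality for each type of error: the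
competitor shares both cloud centres, the own one, the interferer's one or none with the truth. -/
structure IsDecodable {Ω α β γ δ ζ κ : Type*} [Fintype Ω] [Fintype α] [Fintype β] [Fintype γ]
    [Fintype δ] [Fintype ζ] [Fintype κ] (P : Ω → ℝ) (U : Ω → α) (W : Ω → β) (X : Ω → γ) (Z : Ω → δ)
    (A : Ω → ζ) (Q : Ω → κ) (R R' : ℝ) : Prop where
  both : ent P U < R + cmi P X A (fun ω ↦ (W ω, Z ω, Q ω))
  own : ent P U < R - R' + cmi P (fun ω ↦ (Z ω, X ω)) A (fun ω ↦ (W ω, Q ω))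
  interferer : ent P U < cmi P X A (fun ω ↦ (Z ω, Q ω))
  none : ent P U < -R' + cmi P (fun ω ↦ (Z ω, X ω)) A Q

lemma isDecodable_pr {Ω Ω' α β γ δ ζ κ : Type*} [Fintype Ω] [Fintype Ω'] [Fintype α] [Fintype β]
    [Fintype γ] [Fintype δ] [Fintype ζ] [Fintype κ] {P : Ω → ℝ} {T : Ω → Ω'} {U : Ω' → α}
    {W : Ω' → β} {X : Ω' → γ} {Z : Ω' → δ} {A : Ω' → ζ} {Q : Ω' → κ} {R R' : ℝ}
    (h : IsDecodable P (fun ω ↦ U (T ω)) (fun ω ↦ W (T ω)) (fun ω ↦ X (T ω)) (fun ω ↦ Z (T ω))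
      (fun ω ↦ A (T ω)) (fun ω ↦ Q (T ω)) R R') :
    IsDecodable (pr P T) U W X Z A Q R R' where
  both := by simpa only [← ent_comp, ← cmi_comp] using h.both
  own := by simpa only [← ent_comp, ← cmi_comp] using h.own
  interferer := by simpa only [← ent_comp, ← cmi_comp] using h.interferer
  none := by simpa only [← ent_comp, ← cmi_comp] using h.none

variable {Q U W X Z A : Type*} [Fintype Q] [Fintype U] [Fintype W] [Fintype X] [Fintype Z]
  [Fintype A] {pQ : Q → ℝ} {p : U → ℝ} {k : Q → U → W × X → ℝ} {G : Q → X → Z → A → ℝ}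

lemma tendsto_mean_ind_tail (hpQ : IsPMF pQ) (hp : IsPMF p) (hk : ∀ q, IsKernel (k q))
    (hG : ∀ q x z y, 0 ≤ G q x z y) (hG1 : ∀ q x, ∑ z, ∑ y, G q x z y = 1)
    {f g : Q × W × X × Z × A → ℝ} {I R R' : ℝ}
    (h : HasLogRatio (linkLaw pQ (fun q ↦ inputLaw p (k q)) G) f g (-I))
    (hI : ent (receiverLaw pQ p k G) (fun s ↦ s.1.2.1) < R - R' + I) {N N' : ℕ → ℝ}
    (hN : ∀ n, ((2 : ℝ) ^ R) ^ n ≤ N n) (hN' : ∀ n, N' n ≤ 2 * ((2 : ℝ) ^ R') ^ n) {c : ℝ}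
    (hc : 0 < c) :
    Tendsto (fun n : ℕ ↦ mean (prodLaw fun _ : Fin n ↦ receiverLaw pQ p k G) fun s ↦
      ind (c * N n * ∏ i, (p (s i).1.2.1 *
          g ((s i).1.1, (s i).1.2.2.1, (s i).1.2.2.2, (s i).2.1, (s i).2.2)) <
        N' n * ∏ i, f ((s i).1.1, (s i).1.2.2.1, (s i).1.2.2.2, (s i).2.1, (s i).2.2)))
      atTop (nhds 0) :=
  tendsto_mean_ind_mul_prod_lt (isPMF_receiverLaw (isPMF_sourceLaw hpQ hp hk) hG hG1)
    (hasLogRatio_receiverLaw hpQ hp hk hG hG1 h) (by linarith) hN hN' hc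

lemma ind_not_likelihoodTest_prod_le {U W X Z A : Type*} [Fintype W] [Fintype X] [Fintype Z]
    (p : U → ℝ) {n M M' : ℕ} (hM : 0 < M) (ε : ℝ) {κ : Fin n → W × X → ℝ}
    (G : Fin n → X → Z → A → ℝ) (r' : Fin n → Z → ℝ) (u : Fin n → U)
    {a : (Fin n → W) × (Fin n → X)} (z : Fin n → Z) (y : Fin n → A)
    (ha : ∀ i, 0 < fstLaw (κ i) (a.1 i)) :
    ind (¬LikelihoodTest (prodLaw fun _ ↦ p)
      (fun a : (Fin n → W) × (Fin n → X) ↦ ∏ i, κ i (a.1 i, a.2 i))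
      (fun x z y ↦ ∏ i, G i (x i) (z i) (y i)) (prodLaw fun i ↦ fstLaw (κ i)) (prodLaw r')
      M M' ε u a z y) ≤
      ind (ε / 4 * M * ∏ i, (p (u i) * (fstLaw (κ i) (a.1 i) * G i (a.2 i) (z i) (y i))) <
        1 * ∏ i, centreLaw (κ i) (G i) (a.1 i) (z i) (y i)) +
      ind (ε / 4 * M * ∏ i, (p (u i) * (fstLaw (κ i) (a.1 i) * G i (a.2 i) (z i) (y i))) <
        M' * ∏ i, r' i (z i) * ∑ z', centreLaw (κ i) (G i) (a.1 i) z' (y i)) +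
      ind (ε / 4 * 1 * ∏ i, (p (u i) * G i (a.2 i) (z i) (y i)) <
        1 * ∏ i, ∑ w, centreLaw (κ i) (G i) w (z i) (y i)) +
      ind (ε / 4 * 1 * ∏ i, (p (u i) * G i (a.2 i) (z i) (y i)) <
        M' * ∏ i, r' i (z i) * ∑ w, ∑ z', centreLaw (κ i) (G i) w z' (y i)) := by
  refine (ind_not_likelihoodTest_le hM (Finset.prod_pos fun i _ ↦ ha i)).trans_eq ?_
  simp only [centreLaw_prod, Finset.prod_mul_distrib, Fintype.prod_sum, prodLaw, one_mul, mul_one,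
    mul_assoc, mul_left_comm (∏ i, p (u i))]

lemma cmi_linkLaw {α β γ : Type*} [Fintype α] [Fintype β] [Fintype γ] (X' : Q × W × X × Z × A → α)
    (Y' : Q × W × X × Z × A → β) (Z' : Q × W × X × Z × A → γ) :
    cmi (linkLaw pQ (fun q ↦ inputLaw p (k q)) G) X' Y' Z' = cmi (receiverLaw pQ p k G)
      (fun s ↦ X' (s.1.1, s.1.2.2.1, s.1.2.2.2, s.2.1, s.2.2))
      (fun s ↦ Y' (s.1.1, s.1.2.2.1, s.1.2.2.2, s.2.1, s.2.2))
      (fun s ↦ Z' (s.1.1, s.1.2.2.1, s.1.2.2.2, s.2.1, s.2.2)) := by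
  rw [← pr_receiverLaw_link, ← cmi_comp]

lemma tendsto_mean_ind_not_likelihoodTest (hpQ : IsPMF pQ) (hp : IsPMF p)
    (hk : ∀ q, IsKernel (k q)) (hG : ∀ q x z y, 0 ≤ G q x z y)
    (hG1 : ∀ q x, ∑ z, ∑ y, G q x z y = 1) {r' : Q → Z → ℝ} (hr' : IsKernel r')
    (hGr' : ∀ q x z, ∑ y, G q x z y = r' q z) {R R' : ℝ} (hR' : 0 ≤ R')
    (h : IsDecodable (receiverLaw pQ p k G) (fun s ↦ s.1.2.1) (fun s ↦ s.1.2.2.1)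
      (fun s ↦ s.1.2.2.2) (fun s ↦ s.2.1) (fun s ↦ s.2.2) (fun s ↦ s.1.1) R R') {ε : ℝ}
    (hε : 0 < ε) :
    Tendsto (fun n : ℕ ↦ mean (prodLaw fun _ : Fin n ↦ receiverLaw pQ p k G) fun s ↦
      ind (¬LikelihoodTest (prodLaw fun _ ↦ p)
        (fun a : (Fin n → W) × (Fin n → X) ↦ ∏ i, inputLaw p (k (s i).1.1) (a.1 i, a.2 i))
        (fun x z y ↦ ∏ i, G (s i).1.1 (x i) (z i) (y i))
        (prodLaw fun i ↦ fstLaw (inputLaw p (k (s i).1.1))) (prodLaw fun i ↦ r' (s i).1.1)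
        (bookSize R n) (bookSize R' n) ε (fun i ↦ (s i).1.2.1)
        (fun i ↦ (s i).1.2.2.1, fun i ↦ (s i).1.2.2.2) (fun i ↦ (s i).2.1) fun i ↦ (s i).2.2))
      atTop (nhds 0) := by
  have hκ : IsKernel fun q ↦ inputLaw p (k q) := fun q ↦ isPMF_inputLaw hp (hk q)
  have hP := isPMF_receiverLaw (isPMF_sourceLaw hpQ hp hk) hG hG1
  have h1 (n : ℕ) : (1 : ℝ) ≤ 2 * ((2 : ℝ) ^ (0 : ℝ)) ^ n := by norm_num
  have h2 (n : ℕ) : ((2 : ℝ) ^ (0 : ℝ)) ^ n ≤ 1 := by norm_num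
  have hboth := tendsto_mean_ind_tail hpQ hp hk hG hG1
    (hasLogRatio_centreLaw hpQ.1 hκ hG hGr') (R := R) (R' := 0)
    (by rw [cmi_linkLaw, sub_zero]; exact h.both) (le_bookSize R) h1 (div_pos hε four_pos)
  have hown := tendsto_mean_ind_tail hpQ hp hk hG hG1
    (hasLogRatio_mul_sum_centreLaw hpQ.1 hκ hG hr' hGr') (R := R) (R' := R')
    (by rw [cmi_linkLaw]; exact h.own) (le_bookSize R) (bookSize_le hR') (div_pos hε four_pos)
  have hinterferer := tendsto_mean_ind_tail hpQ hp hk hG hG1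
    (hasLogRatio_sum_centreLaw hpQ.1 hκ hG hGr') (R := 0) (R' := 0)
    (by rw [cmi_linkLaw, sub_zero, zero_add]; exact h.interferer) h2 h1 (div_pos hε four_pos)
  have hnone := tendsto_mean_ind_tail hpQ hp hk hG hG1
    (hasLogRatio_mul_sum_sum_centreLaw hpQ.1 hκ hG hr' hGr') (R := 0) (R' := R')
    (by rw [cmi_linkLaw, zero_sub]; exact h.none) h2 (bookSize_le hR') (div_pos hε four_pos)
  have hsum := ((hboth.add hown).add hinterferer).add hnone
  simp only [add_zero, ← mean_add] at hsum
  refine squeeze_zero (fun n ↦ mean_nonneg (isPMF_prodLaw fun _ ↦ hP).1 fun _ ↦ ind_nonneg _)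
    (fun n ↦ mean_mono (isPMF_prodLaw fun _ ↦ hP).1 fun s hs ↦ ?_) hsum
  have hpos (i : Fin n) : 0 < fstLaw (inputLaw p (k (s i).1.1)) (s i).1.2.2.1 := by
    have hsi : receiverLaw pQ p k G (s i) ≠ 0 := Finset.prod_ne_zero_iff.1 hs i (Finset.mem_univ i)
    exact (hasLogRatio_fstLaw hpQ hp hk).right_pos _ (left_ne_zero_of_mul hsi)
  exact ind_not_likelihoodTest_prod_le p (bookSize_pos R n) ε (fun i ↦ G (s i).1.1)
    (fun i ↦ r' (s i).1.1) (fun i ↦ (s i).1.2.1) (fun i ↦ (s i).2.1) (fun i ↦ (s i).2.2) hpos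

end Decoding

section MinErrProb

variable {U U' X X' A : Type*} [Fintype U] [Fintype U'] [Fintype A] {p : U → ℝ} {p' : U' → ℝ}
  {Γ : U' → X → X' → A → ℝ}

/-- The error probability of the receiver's best decoder. -/
noncomputable def minErrProb (p : U → ℝ) (Γ : U' → X → X' → A → ℝ) (f : U → X) (f' : U' → X') : ℝ :=
  ⨅ g : A → U, errProb p Γ f f' g

lemma errProb_nonneg (hp : ∀ u, 0 ≤ p u) (hΓ : IsObservation p' Γ) (f : U → X) (f' : U' → X')
    (g : A → U) : 0 ≤ errProb p Γ f f' g :=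
  mean_nonneg hp fun _ ↦ Finset.sum_nonneg fun _ _ ↦ Finset.sum_nonneg fun _ _ ↦
    mul_nonneg (hΓ.nonneg _ _ _ _) (ind_nonneg _)

lemma minErrProb_nonneg (hp : ∀ u, 0 ≤ p u) (hΓ : IsObservation p' Γ) (f : U → X) (f' : U' → X') :
    0 ≤ minErrProb p Γ f f' :=
  Real.iInf_nonneg fun g ↦ errProb_nonneg hp hΓ f f' g

lemma minErrProb_le (f : U → X) (f' : U' → X') (g : A → U) :
    minErrProb p Γ f f' ≤ errProb p Γ f f' g :=
  ciInf_le (Set.finite_range _).bddBelow g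

lemma exists_errProb_eq_minErrProb [Nonempty U] (p : U → ℝ) (Γ : U' → X → X' → A → ℝ) (f : U → X)
    (f' : U' → X') : ∃ g, errProb p Γ f f' g = minErrProb p Γ f f' :=
  exists_eq_ciInf_of_finite

lemma sum_outputLaw_snd {Z : Type*} [Fintype X'] (k' : U' → Z × X' → ℝ) (hΓ : IsObservation p' Γ)
    (x : X) (z : Z) :
    ∑ y, outputLaw k' Γ x z y = fstLaw (inputLaw p' k') z := by
  rw [fstLaw_inputLaw]
  simp only [outputLaw, mean, fstLaw, Finset.mul_sum]
  rw [Finset.sum_comm]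
  refine Finset.sum_congr rfl fun u' _ ↦ ?_
  rw [Finset.sum_comm]
  refine Finset.sum_congr rfl fun x' _ ↦ ?_
  rw [← Finset.mul_sum, hΓ.sum_eq, mul_comm]

end MinErrProb

section BlockCode

variable {Q U W X : Type*} [Fintype U] [Fintype W] [Fintype X] {pQ : Q → ℝ} {p : U → ℝ}
  {k : Q → U → W × X → ℝ} {n : ℕ}

/-- The law of the cloud centres along the time-sharing word `q`, when the source `p` is sent
through the test channels `k`. -/
noncomputable def cloudLaw (p : U → ℝ) (k : Q → U → W × X → ℝ) (q : Fin n → Q) : (Fin n → W) → ℝ :=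
  prodLaw fun i ↦ fstLaw (inputLaw p (k (q i)))

/-- The law of the random block code of rate `R` along the time-sharing word `q`, with codewords
discarded when their likelihood ratio exceeds `2 ^ (n * t)`. -/
noncomputable def blockCodeLaw (p : U → ℝ) (k : Q → U → W × X → ℝ) (q : Fin n → Q) (R t : ℝ) :
    Code (bookSize R n) (Fin n → U) (Fin n → W) (Fin n → X) → ℝ :=
  codeLaw (wordKernel k q) (cloudLaw p k q) (((2 : ℝ) ^ t) ^ n)

lemma isPMF_cloudLaw (hp : IsPMF p) (hk : ∀ q, IsKernel (k q)) (q : Fin n → Q) :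
    IsPMF (cloudLaw p k q) :=
  isPMF_prodLaw fun i ↦ (isPMF_inputLaw hp (hk (q i))).fstLaw

lemma isPMF_blockCodeLaw (hp : IsPMF p) (hk : ∀ q, IsKernel (k q)) (q : Fin n → Q) (R t : ℝ) :
    IsPMF (blockCodeLaw p k q R t) :=
  isPMF_codeLaw (isKernel_wordKernel hk q) (isPMF_cloudLaw hp hk q)

lemma fstLaw_wordKernel_eq_zero (hp : ∀ u, 0 ≤ p u) (hk : ∀ q, IsKernel (k q)) {q : Fin n → Q}
    {u : Fin n → U} (hu : prodLaw (fun _ ↦ p) u ≠ 0) {w : Fin n → W} (hw : cloudLaw p k q w = 0) :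
    fstLaw (wordKernel k q u) w = 0 := by
  obtain ⟨i, hi, hi0⟩ := Finset.prod_eq_zero_iff.1
    (show ∏ i, fstLaw (inputLaw p (k (q i))) (w i) = 0 from hw)
  have h0 := fstLaw_eq_zero_of_inputLaw hp (hk (q i)) (Finset.prod_ne_zero_iff.1 hu i hi) hi0
  exact (fstLaw_prod _ w).trans (Finset.prod_eq_zero hi h0)

lemma mean_blockCodeLaw_ind_none_le (hp : IsPMF p) (hk : ∀ q, IsKernel (k q)) (R t : ℝ)
    (q : Fin n → Q) {u : Fin n → U} (hu : prodLaw (fun _ ↦ p) u ≠ 0) :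
    mean (blockCodeLaw p k q R t) (fun c ↦ ind (codeword c u = none)) ≤
      mean (wordKernel k q u) (fun a ↦
        ind (1 * ((2 : ℝ) ^ t) ^ n * ∏ i, fstLaw (inputLaw p (k (q i))) (a.1 i) <
          ∏ i, fstLaw (k (q i) (u i)) (a.1 i))) +
      2 * ((2 : ℝ) ^ ((t - R) / 2)) ^ n := by
  have hδ : 0 < ((2 : ℝ) ^ ((t - R) / 2)) ^ n := pow_pos (rpow_pos_of_pos two_pos _) n
  have hs : 0 < ((2 : ℝ) ^ t) ^ n := pow_pos (rpow_pos_of_pos two_pos t) n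
  have hsplit : ((2 : ℝ) ^ t) ^ n = ((2 : ℝ) ^ R) ^ n * ((2 : ℝ) ^ ((t - R) / 2)) ^ n *
      ((2 : ℝ) ^ ((t - R) / 2)) ^ n := by
    rw [← mul_pow, ← mul_pow, ← rpow_add two_pos, ← rpow_add two_pos]
    congr 2
    ring
  have hratio : ((2 : ℝ) ^ t) ^ n / (bookSize R n * ((2 : ℝ) ^ ((t - R) / 2)) ^ n) ≤
      ((2 : ℝ) ^ ((t - R) / 2)) ^ n := by
    have hM : (0 : ℝ) < bookSize R n := Nat.cast_pos.2 (bookSize_pos R n)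
    rw [div_le_iff₀ (mul_pos hM hδ), hsplit, mul_comm]
    exact mul_le_mul_of_nonneg_left (mul_le_mul_of_nonneg_right (le_bookSize R n) hδ.le) hδ.le
  refine (mean_ind_codeword_eq_none_le (bookSize_pos R n) hδ (isKernel_wordKernel hk q)
    (isPMF_cloudLaw hp hk q) hs.le fun w ↦ fstLaw_wordKernel_eq_zero hp.1 hk hu).trans ?_
  have hfst (w : Fin n → W) : fstLaw (wordKernel k q u) w = ∏ i, fstLaw (k (q i) (u i)) (w i) :=
    fstLaw_prod _ w
  simp only [not_le, hfst, cloudLaw, prodLaw, one_mul]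
  linarith

lemma tendsto_mean_ind_codeword_eq_none [Fintype Q] (hpQ : IsPMF pQ) (hp : IsPMF p)
    (hk : ∀ q, IsKernel (k q)) {R t : ℝ}
    (ht : cmi (sourceLaw pQ p k) (fun s ↦ s.2.1) (fun s ↦ s.2.2.1) (fun s ↦ s.1) < t)
    (htR : t < R) :
    Tendsto (fun n : ℕ ↦ mean (prodLaw fun _ : Fin n ↦ pQ) fun q ↦ mean (prodLaw fun _ ↦ p) fun u ↦
      mean (blockCodeLaw p k q R t) fun c ↦ ind (codeword c u = none)) atTop (nhds 0) := by
  have hpQn (n : ℕ) := isPMF_prodLaw fun _ : Fin n ↦ hpQ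
  have hpn (n : ℕ) := isPMF_prodLaw fun _ : Fin n ↦ hp
  have hbase : (2 : ℝ) ^ ((t - R) / 2) < 1 := rpow_lt_one_of_one_lt_of_neg one_lt_two (by linarith)
  have hpow := (tendsto_pow_atTop_nhds_zero_of_lt_one (rpow_nonneg two_pos.le _) hbase).const_mul 2
  have htail := tendsto_mean_ind_prod_lt (isPMF_sourceLaw hpQ hp hk)
    (hasLogRatio_fstLaw hpQ hp hk) ht one_pos
  simp only [mean_prodLaw_sourceLaw] at htail
  have hsum := htail.add hpow
  rw [mul_zero, add_zero] at hsum
  refine squeeze_zero (fun n ↦ mean_nonneg (hpQn n).1 fun q ↦ mean_nonneg (hpn n).1 fun u ↦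
    mean_nonneg (isPMF_blockCodeLaw hp hk q R t).1 fun _ ↦ ind_nonneg _) (fun n ↦ ?_) hsum
  rw [← (hpQn n).mean_const (2 * _), ← mean_add]
  refine mean_mono (hpQn n).1 fun q _ ↦ ?_
  rw [← (hpn n).mean_const (2 * _), ← mean_add]
  exact mean_mono (hpn n).1 fun u hu ↦ mean_blockCodeLaw_ind_none_le hp hk R t q hu

variable {U' Z X' A : Type*} [Fintype U'] [Fintype Z] [Fintype X'] [Fintype A] {p' : U' → ℝ}
  {k' : Q → U' → Z × X' → ℝ} {Γ : U' → X → X' → A → ℝ}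

lemma mean_minErrProb_le (hp : IsPMF p) (hp' : IsPMF p') (hΓ : IsObservation p' Γ)
    (hk : ∀ q, IsKernel (k q)) (hk' : ∀ q, IsKernel (k' q)) (R t R' t' : ℝ) (q : Fin n → Q) {ε : ℝ}
    (hε : 0 ≤ ε) (x₀ : Fin n → X) (x₀' : Fin n → X') :
    mean (blockCodeLaw p k q R t) (fun c ↦ mean (blockCodeLaw p' k' q R' t') fun c' ↦
      minErrProb (prodLaw fun _ ↦ p) (wordObs Γ) (encode x₀ c) (encode x₀' c')) ≤
    mean (prodLaw fun _ ↦ p) (fun u ↦ mean (blockCodeLaw p k q R t) fun c ↦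
      ind (codeword c u = none)) +
    mean (prodLaw fun _ ↦ p') (fun u' ↦ mean (blockCodeLaw p' k' q R' t') fun c' ↦
      ind (codeword c' u' = none)) +
    (mean (prodLaw fun _ ↦ p) (fun u ↦ mean (wordKernel k q u) fun a ↦
      ∑ z : Fin n → Z, ∑ y : Fin n → A, (∏ i, outputLaw (k' (q i)) Γ (a.2 i) (z i) (y i)) *
      ind (¬LikelihoodTest (prodLaw fun _ ↦ p)
        (fun a : (Fin n → W) × (Fin n → X) ↦ ∏ i, inputLaw p (k (q i)) (a.1 i, a.2 i))
        (fun x z y ↦ ∏ i, outputLaw (k' (q i)) Γ (x i) (z i) (y i))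
        (prodLaw fun i ↦ fstLaw (inputLaw p (k (q i))))
        (prodLaw fun i ↦ fstLaw (inputLaw p' (k' (q i))))
        (bookSize R n) (bookSize R' n) ε u a z y)) + ε) := by
  have hpn := isPMF_prodLaw fun _ : Fin n ↦ hp
  have := hpn.nonempty
  have h := mean_errProb_le (s := ((2 : ℝ) ^ t) ^ n) (s' := ((2 : ℝ) ^ t') ^ n)
    (bookSize_pos R n) (bookSize_pos R' n) hpn (isPMF_prodLaw fun _ ↦ hp')
    (isObservation_wordObs hΓ) (isKernel_wordKernel hk q) (isKernel_wordKernel hk' q)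
    (isPMF_cloudLaw hp hk q) (isPMF_cloudLaw hp' hk' q) hε x₀ x₀'
  simp only [funext (inputLaw_wordKernel p k q), funext₃ (outputLaw_wordKernel k' Γ q)] at h
  refine (mean_mono (isPMF_blockCodeLaw hp hk q R t).1 fun c _ ↦
    mean_mono (isPMF_blockCodeLaw hp' hk' q R' t').1 fun c' _ ↦ ?_).trans h
  exact minErrProb_le _ _ _

lemma tendsto_mean_minErrProb [Fintype Q] (hpQ : IsPMF pQ) (hp : IsPMF p) (hp' : IsPMF p')
    (hΓ : IsObservation p' Γ) (hk : ∀ q, IsKernel (k q)) (hk' : ∀ q, IsKernel (k' q))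
    {R t R' t' : ℝ}
    (ht : cmi (sourceLaw pQ p k) (fun s ↦ s.2.1) (fun s ↦ s.2.2.1) (fun s ↦ s.1) < t) (htR : t < R)
    (ht' : cmi (sourceLaw pQ p' k') (fun s ↦ s.2.1) (fun s ↦ s.2.2.1) (fun s ↦ s.1) < t')
    (htR' : t' < R')
    (h : IsDecodable (receiverLaw pQ p k fun q ↦ outputLaw (k' q) Γ) (fun s ↦ s.1.2.1)
      (fun s ↦ s.1.2.2.1) (fun s ↦ s.1.2.2.2) (fun s ↦ s.2.1) (fun s ↦ s.2.2) (fun s ↦ s.1.1) R R')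
    (x₀ : X) (x₀' : X') :
    Tendsto (fun n : ℕ ↦ mean (prodLaw fun _ : Fin n ↦ pQ) fun q ↦
      mean (blockCodeLaw p k q R t) fun c ↦ mean (blockCodeLaw p' k' q R' t') fun c' ↦
        minErrProb (prodLaw fun _ ↦ p) (wordObs Γ) (encode (fun _ ↦ x₀) c)
          (encode (fun _ ↦ x₀') c')) atTop (nhds 0) := by
  have hR' : 0 ≤ R' := ((cmi_nonneg (isPMF_sourceLaw hpQ hp' hk') _ _ _).trans_lt ht'
    |>.trans htR').le
  have hpQn (n : ℕ) := isPMF_prodLaw fun _ : Fin n ↦ hpQ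
  have hpn (n : ℕ) := isPMF_prodLaw fun _ : Fin n ↦ hp
  have hnonneg (n : ℕ) : 0 ≤ mean (prodLaw fun _ : Fin n ↦ pQ) fun q ↦
      mean (blockCodeLaw p k q R t) fun c ↦ mean (blockCodeLaw p' k' q R' t') fun c' ↦
        minErrProb (prodLaw fun _ ↦ p) (wordObs Γ) (encode (fun _ ↦ x₀) c)
          (encode (fun _ ↦ x₀') c') :=
    mean_nonneg (hpQn n).1 fun q ↦ mean_nonneg (isPMF_blockCodeLaw hp hk q R t).1 fun c ↦
      mean_nonneg (isPMF_blockCodeLaw hp' hk' q R' t').1 fun c' ↦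
        minErrProb_nonneg (hpn n).1 (isObservation_wordObs hΓ) _ _
  refine tendsto_order.2 ⟨fun b hb ↦ Eventually.of_forall fun n ↦ hb.trans_le (hnonneg n),
    fun ε hε ↦ ?_⟩
  have htest := tendsto_mean_ind_not_likelihoodTest hpQ hp hk
    (fun q ↦ outputLaw_nonneg (hk' q) hΓ) (fun q ↦ sum_outputLaw hp' (hk' q) hΓ)
    (fun q ↦ (isPMF_inputLaw hp' (hk' q)).fstLaw) (fun q ↦ sum_outputLaw_snd (k' q) hΓ) hR' h
    (half_pos hε)
  simp only [mean_prodLaw_receiverLaw] at htest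
  have hsum := ((tendsto_mean_ind_codeword_eq_none hpQ hp hk ht htR).add
    (tendsto_mean_ind_codeword_eq_none hpQ hp' hk' ht' htR')).add (htest.add_const (ε / 2))
  rw [add_zero, zero_add, zero_add] at hsum
  filter_upwards [hsum.eventually_lt_const (half_lt_self hε)] with n hn
  refine (mean_mono (hpQn n).1 fun q _ ↦
    mean_minErrProb_le hp hp' hΓ hk hk' R t R' t' q (half_pos hε).le _ _).trans_lt ?_
  rwa [mean_add, mean_add, mean_add, (hpQn n).mean_const]

end BlockCode

section TwoReceivers

variable {Q U U' W X Z X' A A' : Type*} [Fintype Q] [Fintype U] [Fintype U'] [Fintype W] [Fintype X]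
  [Fintype Z] [Fintype X'] [Fintype A] [Fintype A'] {pQ : Q → ℝ} {p : U → ℝ} {p' : U' → ℝ}
  {k : Q → U → W × X → ℝ} {k' : Q → U' → Z × X' → ℝ} {Γ : U' → X → X' → A → ℝ}
  {Γ' : U → X' → X → A' → ℝ}

lemma exists_add_le_mean_add_mean {α β γ : Type*} [Fintype α] [Fintype β] [Fintype γ]
    {ρ : γ → ℝ} {p : γ → α → ℝ} {p' : γ → β → ℝ} (hρ : IsPMF ρ) (hp : ∀ c, IsPMF (p c))
    (hp' : ∀ c, IsPMF (p' c)) (F : α → β → ℝ) (F' : β → α → ℝ) :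
    ∃ a b, F a b + F' b a ≤ mean ρ (fun c ↦ mean (p c) fun a ↦ mean (p' c) (F a)) +
      mean ρ (fun c ↦ mean (p' c) fun b ↦ mean (p c) (F' b)) := by
  have hswap (c : γ) : mean (p' c) (fun b ↦ mean (p c) (F' b)) =
      mean (p c) fun a ↦ mean (p' c) fun b ↦ F' b a := mean_comm ..
  simp only [hswap, ← mean_add]
  obtain ⟨c, hc⟩ := hρ.exists_le_mean fun c ↦ mean (p c) fun a ↦ mean (p' c) fun b ↦
    F a b + F' b a
  obtain ⟨a, ha⟩ := (hp c).exists_le_mean fun a ↦ mean (p' c) fun b ↦ F a b + F' b a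
  obtain ⟨b, hb⟩ := (hp' c).exists_le_mean fun b ↦ F a b + F' b a
  exact ⟨a, b, hb.trans (ha.trans hc)⟩

theorem exists_tendsto_minErrProb_add [Nonempty X] [Nonempty X'] (hpQ : IsPMF pQ) (hp : IsPMF p)
    (hp' : IsPMF p') (hΓ : IsObservation p' Γ) (hΓ' : IsObservation p Γ')
    (hk : ∀ q, IsKernel (k q)) (hk' : ∀ q, IsKernel (k' q)) {R R' : ℝ}
    (hR : cmi (sourceLaw pQ p k) (fun s ↦ s.2.1) (fun s ↦ s.2.2.1) (fun s ↦ s.1) < R)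
    (hR' : cmi (sourceLaw pQ p' k') (fun s ↦ s.2.1) (fun s ↦ s.2.2.1) (fun s ↦ s.1) < R')
    (h : IsDecodable (receiverLaw pQ p k fun q ↦ outputLaw (k' q) Γ) (fun s ↦ s.1.2.1)
      (fun s ↦ s.1.2.2.1) (fun s ↦ s.1.2.2.2) (fun s ↦ s.2.1) (fun s ↦ s.2.2) (fun s ↦ s.1.1) R R')
    (h' : IsDecodable (receiverLaw pQ p' k' fun q ↦ outputLaw (k q) Γ') (fun s ↦ s.1.2.1)
      (fun s ↦ s.1.2.2.1) (fun s ↦ s.1.2.2.2) (fun s ↦ s.2.1) (fun s ↦ s.2.2) (fun s ↦ s.1.1)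
      R' R) :
    ∃ (f : ∀ n, (Fin n → U) → Fin n → X) (f' : ∀ n, (Fin n → U') → Fin n → X'),
      Tendsto (fun n ↦ minErrProb (prodLaw fun _ ↦ p) (wordObs Γ) (f n) (f' n) +
        minErrProb (prodLaw fun _ ↦ p') (wordObs Γ') (f' n) (f n)) atTop (nhds 0) := by
  obtain ⟨x₀⟩ := ‹Nonempty X›
  obtain ⟨x₀'⟩ := ‹Nonempty X'›
  obtain ⟨t, ht, htR⟩ := exists_between hR
  obtain ⟨t', ht', htR'⟩ := exists_between hR'
  have hsum := (tendsto_mean_minErrProb hpQ hp hp' hΓ hk hk' ht htR ht' htR' h x₀ x₀').add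
    (tendsto_mean_minErrProb hpQ hp' hp hΓ' hk' hk ht' htR' ht htR h' x₀' x₀)
  rw [add_zero] at hsum
  have hcodes (n : ℕ) : ∃ (f : (Fin n → U) → Fin n → X) (f' : (Fin n → U') → Fin n → X'),
      minErrProb (prodLaw fun _ ↦ p) (wordObs Γ) f f' +
        minErrProb (prodLaw fun _ ↦ p') (wordObs Γ') f' f ≤
      mean (prodLaw fun _ : Fin n ↦ pQ) (fun q ↦ mean (blockCodeLaw p k q R t) fun c ↦
        mean (blockCodeLaw p' k' q R' t') fun c' ↦ minErrProb (prodLaw fun _ ↦ p) (wordObs Γ)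
          (encode (fun _ ↦ x₀) c) (encode (fun _ ↦ x₀') c')) +
      mean (prodLaw fun _ : Fin n ↦ pQ) (fun q ↦ mean (blockCodeLaw p' k' q R' t') fun c' ↦
        mean (blockCodeLaw p k q R t) fun c ↦ minErrProb (prodLaw fun _ ↦ p') (wordObs Γ')
          (encode (fun _ ↦ x₀') c') (encode (fun _ ↦ x₀) c)) := by
    obtain ⟨c, c', hcc'⟩ := exists_add_le_mean_add_mean (isPMF_prodLaw fun _ : Fin n ↦ hpQ)
      (isPMF_blockCodeLaw hp hk · R t) (isPMF_blockCodeLaw hp' hk' · R' t')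
      (fun c c' ↦ minErrProb (prodLaw fun _ ↦ p) (wordObs Γ) (encode (fun _ ↦ x₀) c)
        (encode (fun _ ↦ x₀') c'))
      fun c' c ↦ minErrProb (prodLaw fun _ ↦ p') (wordObs Γ') (encode (fun _ ↦ x₀') c')
        (encode (fun _ ↦ x₀) c)
    exact ⟨_, _, hcc'⟩
  choose f f' hff' using hcodes
  exact ⟨f, f', squeeze_zero (fun n ↦ add_nonneg
    (minErrProb_nonneg (isPMF_prodLaw fun _ ↦ hp).1 (isObservation_wordObs hΓ) _ _)
    (minErrProb_nonneg (isPMF_prodLaw fun _ ↦ hp').1 (isObservation_wordObs hΓ') _ _)) hff' hsum⟩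

end TwoReceivers

section Rates

lemma exists_mem_Ioo_sub_mem_Ioo {a b c d l m : ℝ} (hab : a < b) (hcd : c < d) (hlm : l < m)
    (hadm : a - d < m) (hlbc : l < b - c) :
    ∃ x ∈ Set.Ioo a b, ∃ y ∈ Set.Ioo c d, x - y ∈ Set.Ioo l m := by
  obtain ⟨y, hy, hy'⟩ : ∃ y, max c (a - m) < y ∧ y < min d (b - l) :=
    exists_between (max_lt (lt_min hcd (by linarith)) (lt_min (by linarith) (by linarith)))
  rw [max_lt_iff] at hy
  rw [lt_min_iff] at hy'
  obtain ⟨x, hx, hx'⟩ : ∃ x, max a (y + l) < x ∧ x < min b (y + m) :=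
    exists_between (max_lt (lt_min hab (by linarith)) (lt_min (by linarith) (by linarith)))
  rw [max_lt_iff] at hx
  rw [lt_min_iff] at hx'
  exact ⟨x, ⟨hx.1, hx'.1⟩, y, ⟨hy.1, hy'.1⟩, by linarith, by linarith⟩

-- Fourier–Motzkin elimination of the rates `R1`, `R2` from the decoding conditions.
lemma exists_rates_of_sum_lt {H1 H2 I1 I2 a1 a2 c1 c2 d1 d2 : ℝ} (h1 : H1 < d1 - I2)
    (h2 : H2 < d2 - I1) (had : H1 + H2 < a1 + d2) (hda : H1 + H2 < a2 + d1)
    (hcc : H1 + H2 < c2 + c1) (hdc : H1 + H2 < d1 + c2 - I1) (hcd : H1 + H2 < d2 + c1 - I2)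
    (hdac : 2 * H1 + H2 < d1 + a1 + c2) (hcda : H1 + 2 * H2 < d2 + a2 + c1) :
    ∃ R1 R2, I1 < R1 ∧ I2 < R2 ∧
      H1 < R1 + a1 ∧ H1 < R1 - R2 + c1 ∧ H1 < -R2 + d1 ∧
      H2 < R2 + a2 ∧ H2 < R2 - R1 + c2 ∧ H2 < -R1 + d2 := by
  obtain ⟨R1, hR1, R2, hR2, hsub⟩ : ∃ R1 ∈ Set.Ioo (max I1 (H1 - a1)) (d2 - H2),
      ∃ R2 ∈ Set.Ioo (max I2 (H2 - a2)) (d1 - H1), R1 - R2 ∈ Set.Ioo (H1 - c1) (c2 - H2) := by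
    refine exists_mem_Ioo_sub_mem_Ioo (max_lt ?_ ?_) (max_lt ?_ ?_) ?_ ?_ ?_
    · linarith
    · linarith
    · linarith
    · linarith
    · linarith
    · rcases max_choice I1 (H1 - a1) with h | h <;> rw [h] <;> linarith
    · rcases max_choice I2 (H2 - a2) with h | h <;> rw [h] <;> linarith
  simp only [Set.mem_Ioo, max_lt_iff] at hR1 hR2 hsub
  refine ⟨R1, R2, hR1.1.1, hR2.1.1, ?_, ?_, ?_, ?_, ?_, ?_⟩ <;> linarith

end Rates

section CrossChannel

variable {U1 V1 U2 V2 X1 X2 Y1 Y2 : Type} {ch : X1 × X2 → Y1 × Y2 → ℝ} {q1 : U1 × V1 → ℝ}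
  {q2 : U2 × V2 → ℝ} {n : ℕ}

/-- The interference channel with the roles of the two users exchanged. -/
def swapChannel (ch : X1 × X2 → Y1 × Y2 → ℝ) (x : X2 × X1) (y : Y2 × Y1) : ℝ :=
  ch x.swap y.swap

/-- The joint law of the interfering letter `u2`, the side information on it and the channel output
of Receiver 1, as a function of the letter and of the two channel inputs. -/
def receiverObs [Fintype Y2] (ch : X1 × X2 → Y1 × Y2 → ℝ) (q2 : U2 × V2 → ℝ) (u2 : U2) (x1 : X1)
    (x2 : X2) (a : V2 × Y1) : ℝ :=
  q2 (u2, a.1) * fstLaw (ch (x1, x2)) a.2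

/-- The joint law of the words `(u1, v1, u2, v2, y)` in a transmission with encoders `f1`, `f2`. -/
def transmissionLaw (ch : X1 × X2 → Y1 × Y2 → ℝ) (q1 : U1 × V1 → ℝ) (q2 : U2 × V2 → ℝ)
    (f1 : (Fin n → U1) → Fin n → X1) (f2 : (Fin n → U2) → Fin n → X2) :
    (Fin n → U1) × (Fin n → V1) × (Fin n → U2) × (Fin n → V2) × (Fin n → Y1 × Y2) → ℝ :=
  fun (u1, v1, u2, v2, y) ↦ (∏ i, q1 (u1 i, v1 i)) * (∏ i, q2 (u2 i, v2 i)) *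
    ∏ i, ch (f1 u1 i, f2 u2 i) (y i)

lemma prodLaw_fstLaw [Fintype V1] (q : U1 × V1 → ℝ) (u : Fin n → U1) :
    prodLaw (fun _ ↦ fstLaw q) u = ∑ v : Fin n → V1, ∏ i, q (u i, v i) :=
  Fintype.prod_sum fun i v ↦ q (u i, v)

lemma wordObs_receiverObs [Fintype Y2] (u2 : Fin n → U2) (x1 : Fin n → X1) (x2 : Fin n → X2)
    (a : Fin n → V2 × Y1) : wordObs (receiverObs ch q2) u2 x1 x2 a =
      ∑ y2 : Fin n → Y2, (∏ i, q2 (u2 i, (a i).1)) * ∏ i, ch (x1 i, x2 i) ((a i).2, y2 i) := by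
  simp only [wordObs, receiverObs, fstLaw, Finset.prod_mul_distrib, ← Finset.mul_sum]
  congr 1
  exact Fintype.prod_sum fun i y2 ↦ ch (x1 i, x2 i) ((a i).2, y2)

variable [Fintype Y1] [Fintype Y2]

lemma isKernel_swapChannel (hch : IsKernel ch) : IsKernel (swapChannel ch) := fun x ↦
  ⟨fun y ↦ (hch x.swap).1 y.swap,
    ((Equiv.prodComm Y2 Y1).sum_comp (ch x.swap)).trans (hch x.swap).2⟩

variable [Fintype U2] [Fintype V2]

lemma isObservation_receiverObs (hch : IsKernel ch) (hq2 : IsPMF q2) :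
    IsObservation (fstLaw q2) (receiverObs ch q2) where
  nonneg _ _ _ _ := mul_nonneg (hq2.1 _) (fstLaw_nonneg (hch _).1 _)
  sum_eq u2 x1 x2 := by
    simp only [receiverObs, Fintype.sum_prod_type, ← Finset.mul_sum, (hch (x1, x2)).fstLaw.2,
      mul_one]
    rfl

variable [Fintype U1] [Fintype V1]

lemma PerrCross_eq_mean (f1 : (Fin n → U1) → Fin n → X1) (f2 : (Fin n → U2) → Fin n → X2)
    (g1 : (Fin n → Y1) → (Fin n → V2) → Fin n → U1)
    (g2 : (Fin n → Y2) → (Fin n → V1) → Fin n → U2) :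
    PerrCross ch q1 q2 n f1 f2 g1 g2 = mean (transmissionLaw ch q1 q2 f1 f2)
      fun (u1, v1, u2, v2, y) ↦
        ind (g1 (fun i ↦ (y i).1) v2 ≠ u1 ∨ g2 (fun i ↦ (y i).2) v1 ≠ u2) := by
  simp only [PerrCross, mean, transmissionLaw, Fintype.sum_prod_type, ind, ne_eq, ← not_and_or,
    ite_not]

lemma transmissionLaw_nonneg (hch : IsKernel ch) (hq1 : IsPMF q1) (hq2 : IsPMF q2)
    (f1 : (Fin n → U1) → Fin n → X1) (f2 : (Fin n → U2) → Fin n → X2) (ω) :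
    0 ≤ transmissionLaw ch q1 q2 f1 f2 ω :=
  mul_nonneg (mul_nonneg (Finset.prod_nonneg fun _ _ ↦ hq1.1 _)
    (Finset.prod_nonneg fun _ _ ↦ hq2.1 _)) (Finset.prod_nonneg fun _ _ ↦ (hch _).1 _)

lemma errProb_receiverObs (f1 : (Fin n → U1) → Fin n → X1) (f2 : (Fin n → U2) → Fin n → X2)
    (g1 : (Fin n → V2 × Y1) → Fin n → U1) :
    errProb (prodLaw fun _ ↦ fstLaw q1) (wordObs (receiverObs ch q2)) f1 f2 g1 =
      mean (transmissionLaw ch q1 q2 f1 f2)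
        fun (u1, _, _, v2, y) ↦ ind (g1 (fun i ↦ (v2 i, (y i).1)) ≠ u1) := by
  simp only [errProb, mean, prodLaw_fstLaw, Finset.sum_mul]
  simp only [transmissionLaw, Fintype.sum_prod_type, sum_arrow_prod, wordObs_receiverObs,
    Finset.sum_mul, Finset.mul_sum, mul_assoc]

lemma mean_transmissionLaw_swapChannel (f1 : (Fin n → U1) → Fin n → X1)
    (f2 : (Fin n → U2) → Fin n → X2)
    (F : (Fin n → U2) × (Fin n → V2) × (Fin n → U1) × (Fin n → V1) × (Fin n → Y2 × Y1) → ℝ) :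
    mean (transmissionLaw (swapChannel ch) q2 q1 f2 f1) F = mean (transmissionLaw ch q1 q2 f1 f2)
      fun (u1, v1, u2, v2, y) ↦ F (u2, v2, u1, v1, fun i ↦ (y i).swap) := by
  refine Fintype.sum_equiv
    ⟨fun (u2, v2, u1, v1, y) ↦ (u1, v1, u2, v2, fun i ↦ (y i).swap),
      fun (u1, v1, u2, v2, y) ↦ (u2, v2, u1, v1, fun i ↦ (y i).swap), fun _ ↦ rfl, fun _ ↦ rfl⟩
    _ _ fun (u2, v2, u1, v1, y) ↦ ?_
  simp only [transmissionLaw, swapChannel, Prod.swap_prod_mk, Prod.swap_swap, Equiv.coe_fn_mk,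
    mul_comm (∏ i, q1 (u1 i, v1 i))]

lemma PerrCross_le (hch : IsKernel ch) (hq1 : IsPMF q1) (hq2 : IsPMF q2)
    (f1 : (Fin n → U1) → Fin n → X1) (f2 : (Fin n → U2) → Fin n → X2)
    (g1 : (Fin n → V2 × Y1) → Fin n → U1) (g2 : (Fin n → V1 × Y2) → Fin n → U2) :
    PerrCross ch q1 q2 n f1 f2 (fun y v ↦ g1 fun i ↦ (v i, y i)) (fun y v ↦ g2 fun i ↦ (v i, y i)) ≤
      errProb (prodLaw fun _ ↦ fstLaw q1) (wordObs (receiverObs ch q2)) f1 f2 g1 +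
      errProb (prodLaw fun _ ↦ fstLaw q2) (wordObs (receiverObs (swapChannel ch) q1)) f2 f1 g2 := by
  rw [PerrCross_eq_mean, errProb_receiverObs, errProb_receiverObs,
    mean_transmissionLaw_swapChannel, ← mean_add]
  exact mean_mono (transmissionLaw_nonneg hch hq1 hq2 f1 f2) fun _ _ ↦ ind_or_le _ _

theorem reliableCross_of_tendsto_minErrProb (hch : IsKernel ch) (hq1 : IsPMF q1) (hq2 : IsPMF q2)
    {f1 : ∀ n, (Fin n → U1) → Fin n → X1} {f2 : ∀ n, (Fin n → U2) → Fin n → X2}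
    (h : Tendsto (fun n ↦
      minErrProb (prodLaw fun _ ↦ fstLaw q1) (wordObs (receiverObs ch q2)) (f1 n) (f2 n) +
      minErrProb (prodLaw fun _ ↦ fstLaw q2) (wordObs (receiverObs (swapChannel ch) q1)) (f2 n)
        (f1 n)) atTop (nhds 0)) :
    ReliableCross ch q1 q2 := by
  have : Nonempty U1 := hq1.nonempty.map Prod.fst
  have : Nonempty U2 := hq2.nonempty.map Prod.fst
  choose g1 hg1 using fun n ↦ exists_errProb_eq_minErrProb (prodLaw fun _ : Fin n ↦ fstLaw q1)
    (wordObs (receiverObs ch q2)) (f1 n) (f2 n)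
  choose g2 hg2 using fun n ↦ exists_errProb_eq_minErrProb (prodLaw fun _ : Fin n ↦ fstLaw q2)
    (wordObs (receiverObs (swapChannel ch) q1)) (f2 n) (f1 n)
  refine ⟨f1, f2, fun n y v ↦ g1 n fun i ↦ (v i, y i), fun n y v ↦ g2 n fun i ↦ (v i, y i),
    squeeze_zero (fun n ↦ ?_) (fun n ↦ ?_) h⟩
  · rw [PerrCross_eq_mean]
    exact mean_nonneg (transmissionLaw_nonneg hch hq1 hq2 _ _) fun _ ↦ ind_nonneg _
  · rw [← hg1, ← hg2]
    exact PerrCross_le hch hq1 hq2 _ _ _ _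

end CrossChannel

section JointLaw

variable {U1 V1 U2 V2 X1 X2 Y1 Y2 : Type} [Fintype U1] [Fintype V1] [Fintype U2] [Fintype V2]
  [Fintype X1] [Fintype X2] [Fintype Y1] [Fintype Y2] {mQ mW1 mW2 : ℕ}
  {ch : X1 × X2 → Y1 × Y2 → ℝ} {q1 : U1 × V1 → ℝ} {q2 : U2 × V2 → ℝ} {pQ : Fin mQ → ℝ}
  {k1 : U1 → Fin mQ → Fin mW1 × X1 → ℝ} {k2 : U2 → Fin mQ → Fin mW2 × X2 → ℝ}

lemma pr_jointHK_receiver1 :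
    pr (jointHK mQ mW1 mW2 ch q1 q2 pQ k1 k2)
      (fun (q, u1, _, _, v2, w1, x1, w2, _, y1, _) ↦ ((q, u1, w1, x1), (w2, (v2, y1)))) =
    receiverLaw pQ (fstLaw q1) (fun q u ↦ k1 u q)
      fun q ↦ outputLaw (fun u ↦ k2 u q) (receiverObs ch q2) := by
  ext ⟨⟨q, u1, w1, x1⟩, w2, v2, y1⟩
  have hfactor (v1 : V1) (u2 : U2) (x2 : X2) (y2 : Y2) :
      pQ q * q1 (u1, v1) * q2 (u2, v2) * k1 u1 q (w1, x1) * k2 u2 q (w2, x2) *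
        ch (x1, x2) (y1, y2) =
      pQ q * (q1 (u1, v1) * k1 u1 q (w1, x1)) *
        (k2 u2 q (w2, x2) * (q2 (u2, v2) * ch (x1, x2) (y1, y2))) := by
    ring
  simp only [pr, Fintype.sum_prod_type, Prod.mk.injEq, ite_and, Finset.sum_ite_irrel,
    Finset.sum_const_zero, Finset.sum_ite_eq', Finset.mem_univ, if_true, jointHK]
  simp only [hfactor, ← Finset.mul_sum, ← Finset.sum_mul, receiverLaw, sourceLaw, outputLaw,
    receiverObs, fstLaw]

lemma pr_jointHK_receiver2 :
    pr (jointHK mQ mW1 mW2 ch q1 q2 pQ k1 k2)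
      (fun (q, _, v1, u2, _, w1, _, w2, x2, _, y2) ↦ ((q, u2, w2, x2), (w1, (v1, y2)))) =
    receiverLaw pQ (fstLaw q2) (fun q u ↦ k2 u q)
      fun q ↦ outputLaw (fun u ↦ k1 u q) (receiverObs (swapChannel ch) q1) := by
  ext ⟨⟨q, u2, w2, x2⟩, w1, v1, y2⟩
  have hfactor (u1 : U1) (v2 : V2) (x1 : X1) (y1 : Y1) :
      pQ q * q1 (u1, v1) * q2 (u2, v2) * k1 u1 q (w1, x1) * k2 u2 q (w2, x2) *
        ch (x1, x2) (y1, y2) =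
      pQ q * (q2 (u2, v2) * k2 u2 q (w2, x2)) *
        (k1 u1 q (w1, x1) * (q1 (u1, v1) * ch (x1, x2) (y1, y2))) := by
    ring
  simp only [pr, Fintype.sum_prod_type, Prod.mk.injEq, ite_and, Finset.sum_ite_irrel,
    Finset.sum_const_zero, Finset.sum_ite_eq', Finset.mem_univ, if_true, jointHK]
  simp only [hfactor, ← Finset.mul_sum, ← Finset.sum_mul, receiverLaw, sourceLaw, outputLaw,
    receiverObs, swapChannel, Prod.swap_prod_mk, fstLaw]

end JointLaw

section Reliability

variable {U1 V1 U2 V2 X1 X2 Y1 Y2 : Type} [Fintype U1] [Fintype V1] [Fintype U2] [Fintype V2]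
  [Fintype X1] [Fintype X2] [Fintype Y1] [Fintype Y2] {mQ mW1 mW2 : ℕ}
  {ch : X1 × X2 → Y1 × Y2 → ℝ} {q1 : U1 × V1 → ℝ} {q2 : U2 × V2 → ℝ} {pQ : Fin mQ → ℝ}
  {k1 : U1 → Fin mQ → Fin mW1 × X1 → ℝ} {k2 : U2 → Fin mQ → Fin mW2 × X2 → ℝ}

theorem reliableCross_of_isDecodable (hch : IsKernel ch) (hq1 : IsPMF q1) (hq2 : IsPMF q2)
    (hpQ : IsPMF pQ) (hk1 : ∀ u q, IsPMF (k1 u q)) (hk2 : ∀ u q, IsPMF (k2 u q)) {R1 R2 : ℝ}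
    (hR1 : cmi (jointHK mQ mW1 mW2 ch q1 q2 pQ k1 k2) (fun (_, u1, _) ↦ u1)
      (fun (_, _, _, _, _, w1, _) ↦ w1) (fun (q, _) ↦ q) < R1)
    (hR2 : cmi (jointHK mQ mW1 mW2 ch q1 q2 pQ k1 k2) (fun (_, _, _, u2, _) ↦ u2)
      (fun (_, _, _, _, _, _, _, w2, _) ↦ w2) (fun (q, _) ↦ q) < R2)
    (h1 : IsDecodable (jointHK mQ mW1 mW2 ch q1 q2 pQ k1 k2) (fun (_, u1, _) ↦ u1)
      (fun (_, _, _, _, _, w1, _) ↦ w1) (fun (_, _, _, _, _, _, x1, _) ↦ x1)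
      (fun (_, _, _, _, _, _, _, w2, _) ↦ w2)
      (fun (_, _, _, _, v2, _, _, _, _, y1, _) ↦ (v2, y1)) (fun (q, _) ↦ q) R1 R2)
    (h2 : IsDecodable (jointHK mQ mW1 mW2 ch q1 q2 pQ k1 k2) (fun (_, _, _, u2, _) ↦ u2)
      (fun (_, _, _, _, _, _, _, w2, _) ↦ w2) (fun (_, _, _, _, _, _, _, _, x2, _) ↦ x2)
      (fun (_, _, _, _, _, w1, _) ↦ w1)
      (fun (_, _, v1, _, _, _, _, _, _, _, y2) ↦ (v1, y2)) (fun (q, _) ↦ q) R2 R1) :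
    ReliableCross ch q1 q2 := by
  have : Nonempty X1 := (hk1 hq1.nonempty.some.1 hpQ.nonempty.some).nonempty.map Prod.snd
  have : Nonempty X2 := (hk2 hq2.nonempty.some.1 hpQ.nonempty.some).nonempty.map Prod.snd
  have hk1' (q : Fin mQ) : IsKernel fun u ↦ k1 u q := fun u ↦ hk1 u q
  have hk2' (q : Fin mQ) : IsKernel fun u ↦ k2 u q := fun u ↦ hk2 u q
  have hobs1 : IsObservation (fstLaw q2) (receiverObs ch q2) := isObservation_receiverObs hch hq2
  have hobs2 : IsObservation (fstLaw q1) (receiverObs (swapChannel ch) q1) :=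
    isObservation_receiverObs (isKernel_swapChannel hch) hq1
  have hsource1 : pr (jointHK mQ mW1 mW2 ch q1 q2 pQ k1 k2)
      (fun (q, u1, _, _, _, w1, x1, _) ↦ (q, u1, w1, x1)) =
      sourceLaw pQ (fstLaw q1) fun q u ↦ k1 u q := by
    rw [← pr_receiverLaw_fst pQ (fstLaw q1) (fun q u ↦ k1 u q) fun q ↦
      sum_outputLaw hq2.fstLaw (hk2' q) hobs1, ← pr_jointHK_receiver1]
    ext s
    rw [← pr_comp]
  have hsource2 : pr (jointHK mQ mW1 mW2 ch q1 q2 pQ k1 k2)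
      (fun (q, _, _, u2, _, _, _, w2, x2, _) ↦ (q, u2, w2, x2)) =
      sourceLaw pQ (fstLaw q2) fun q u ↦ k2 u q := by
    rw [← pr_receiverLaw_fst pQ (fstLaw q2) (fun q u ↦ k2 u q) fun q ↦
      sum_outputLaw hq1.fstLaw (hk1' q) hobs2, ← pr_jointHK_receiver2]
    ext s
    rw [← pr_comp]
  obtain ⟨f1, f2, hf⟩ := exists_tendsto_minErrProb_add (R := R1) (R' := R2) hpQ hq1.fstLaw
    hq2.fstLaw hobs1 hobs2 hk1' hk2' (by rwa [← hsource1, ← cmi_comp])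
    (by rwa [← hsource2, ← cmi_comp])
    (by rw [← pr_jointHK_receiver1]; exact isDecodable_pr h1)
    (by rw [← pr_jointHK_receiver2]; exact isDecodable_pr h2)
  exact reliableCross_of_tendsto_minErrProb hch hq1 hq2 hf

end Reliability

section Stmt1

variable {U1 V1 U2 V2 X1 X2 Y1 Y2 : Type}
  [Fintype U1] [Fintype V1] [Fintype U2] [Fintype V2]
  [Fintype X1] [Fintype X2] [Fintype Y1] [Fintype Y2]

theorem stmt1 (ch : X1 × X2 → Y1 × Y2 → ℝ) (q1 : U1 × V1 → ℝ) (q2 : U2 × V2 → ℝ)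
    (hch : IsKernel ch) (hq1 : IsPMF q1) (hq2 : IsPMF q2)
    (h : ∃ (mQ mW1 mW2 : ℕ) (pQ : Fin mQ → ℝ)
        (k1 : U1 → Fin mQ → Fin mW1 × X1 → ℝ) (k2 : U2 → Fin mQ → Fin mW2 × X2 → ℝ),
        IsPMF pQ ∧ (∀ u q, IsPMF (k1 u q)) ∧ (∀ u q, IsPMF (k2 u q)) ∧
        (let p := jointHK mQ mW1 mW2 ch q1 q2 pQ k1 k2
         let vQ := fun (ω : Fin mQ × U1 × V1 × U2 × V2 × Fin mW1 × X1 × Fin mW2 × X2 × Y1 × Y2) => ω.1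
         let vU1 := fun (ω : Fin mQ × U1 × V1 × U2 × V2 × Fin mW1 × X1 × Fin mW2 × X2 × Y1 × Y2) => ω.2.1
         let vV1 := fun (ω : Fin mQ × U1 × V1 × U2 × V2 × Fin mW1 × X1 × Fin mW2 × X2 × Y1 × Y2) => ω.2.2.1
         let vU2 := fun (ω : Fin mQ × U1 × V1 × U2 × V2 × Fin mW1 × X1 × Fin mW2 × X2 × Y1 × Y2) => ω.2.2.2.1
         let vV2 := fun (ω : Fin mQ × U1 × V1 × U2 × V2 × Fin mW1 × X1 × Fin mW2 × X2 × Y1 × Y2) => ω.2.2.2.2.1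
         let vW1 := fun (ω : Fin mQ × U1 × V1 × U2 × V2 × Fin mW1 × X1 × Fin mW2 × X2 × Y1 × Y2) => ω.2.2.2.2.2.1
         let vX1 := fun (ω : Fin mQ × U1 × V1 × U2 × V2 × Fin mW1 × X1 × Fin mW2 × X2 × Y1 × Y2) => ω.2.2.2.2.2.2.1
         let vW2 := fun (ω : Fin mQ × U1 × V1 × U2 × V2 × Fin mW1 × X1 × Fin mW2 × X2 × Y1 × Y2) => ω.2.2.2.2.2.2.2.1
         let vX2 := fun (ω : Fin mQ × U1 × V1 × U2 × V2 × Fin mW1 × X1 × Fin mW2 × X2 × Y1 × Y2) => ω.2.2.2.2.2.2.2.2.1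
         let vY1 := fun (ω : Fin mQ × U1 × V1 × U2 × V2 × Fin mW1 × X1 × Fin mW2 × X2 × Y1 × Y2) => ω.2.2.2.2.2.2.2.2.2.1
         let vY2 := fun (ω : Fin mQ × U1 × V1 × U2 × V2 × Fin mW1 × X1 × Fin mW2 × X2 × Y1 × Y2) => ω.2.2.2.2.2.2.2.2.2.2
         -- receiver super-outputs
         let A1 := fun ω => (vV2 ω, vY1 ω)   -- (V2, Y1) at Receiver 1
         let A2 := fun ω => (vV1 ω, vY2 ω)   -- (V1, Y2) at Receiver 2
         ent p vU1 < cmi p vX1 A1 (fun ω => (vW2 ω, vQ ω)) ∧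
         ent p vU2 < cmi p vX2 A2 (fun ω => (vW1 ω, vQ ω)) ∧
         ent p vU1 < cmi p (fun ω => (vW2 ω, vX1 ω)) A1 vQ - cmi p vU2 vW2 vQ ∧
         ent p vU2 < cmi p (fun ω => (vW1 ω, vX2 ω)) A2 vQ - cmi p vU1 vW1 vQ ∧
         ent p vU1 + ent p vU2 <
           cmi p vX1 A1 (fun ω => (vW1 ω, vW2 ω, vQ ω)) +
           cmi p (fun ω => (vW1 ω, vX2 ω)) A2 vQ ∧
         ent p vU1 + ent p vU2 <
           cmi p vX2 A2 (fun ω => (vW1 ω, vW2 ω, vQ ω)) +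
           cmi p (fun ω => (vW2 ω, vX1 ω)) A1 vQ ∧
         ent p vU1 + ent p vU2 <
           cmi p (fun ω => (vW1 ω, vX2 ω)) A2 (fun ω => (vW2 ω, vQ ω)) +
           cmi p (fun ω => (vW2 ω, vX1 ω)) A1 (fun ω => (vW1 ω, vQ ω)) ∧
         ent p vU1 + ent p vU2 <
           cmi p (fun ω => (vW2 ω, vX1 ω)) A1 vQ +
           cmi p (fun ω => (vW1 ω, vX2 ω)) A2 (fun ω => (vW2 ω, vQ ω)) - cmi p vU1 vW1 vQ ∧
         ent p vU1 + ent p vU2 <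
           cmi p (fun ω => (vW1 ω, vX2 ω)) A2 vQ +
           cmi p (fun ω => (vW2 ω, vX1 ω)) A1 (fun ω => (vW1 ω, vQ ω)) - cmi p vU2 vW2 vQ ∧
         2 * ent p vU1 + ent p vU2 <
           cmi p (fun ω => (vW2 ω, vX1 ω)) A1 vQ +
           cmi p vX1 A1 (fun ω => (vW1 ω, vW2 ω, vQ ω)) +
           cmi p (fun ω => (vW1 ω, vX2 ω)) A2 (fun ω => (vW2 ω, vQ ω)) ∧
         ent p vU1 + 2 * ent p vU2 <
           cmi p (fun ω => (vW1 ω, vX2 ω)) A2 vQ +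
           cmi p vX2 A2 (fun ω => (vW1 ω, vW2 ω, vQ ω)) +
           cmi p (fun ω => (vW2 ω, vX1 ω)) A1 (fun ω => (vW1 ω, vQ ω)))) :
    ReliableCross ch q1 q2 := by
  obtain ⟨mQ, mW1, mW2, pQ, k1, k2, hpQ, hk1, hk2, h1, h2, hd1, hd2, had, hda, hcc, hdc, hcd, hdac,
    hcda⟩ := h
  obtain ⟨R1, R2, hR1, hR2, both1, own1, none1, both2, own2, none2⟩ :=
    exists_rates_of_sum_lt hd1 hd2 had hda hcc hdc hcd hdac hcda
  rw [cmi_left_comm] at both2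
  exact reliableCross_of_isDecodable hch hq1 hq2 hpQ hk1 hk2 hR1 hR2 ⟨both1, own1, h1, none1⟩
    ⟨both2, own2, h2, none2⟩

end Stmt1

end Paper
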